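/- There exists a universal constant c₁ > 0 such that for every N ≥ 2, if U is an N × N random unitary matrix distributed according to Haar measure on the unitary group U(N), then the expected Kolmogorov distance between its empirical spectral measure and the uniform measure on the unit circle satisfies E d_K(μ_N, ν) ≥ c₁ · log(N)/N. -/

import Mathlib

open MeasureTheory Real Filter

noncomputable section

/-- The Borel σ-algebra on the unitary group `U(N)`. -/
instance (N : ℕ) : MeasurableSpace (Matrix.unitaryGroup (Fin N) ℂ) := borel _

instance (N : ℕ) : BorelSpace (Matrix.unitaryGroup (Fin N) ℂ) := ⟨rfl⟩

/-- The eigenvalue angles (in `[0, 2π)`, with multiplicity) of a unitary matrix `U`: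
the arguments of the roots of the characteristic polynomial, shifted to lie in `[0, 2π)`. -/
def eigenAngles (N : ℕ) (U : Matrix.unitaryGroup (Fin N) ℂ) : Multiset ℝ :=
  ((U : Matrix (Fin N) (Fin N) ℂ).charpoly.roots).map
    (fun z => if 0 ≤ Complex.arg z then Complex.arg z else Complex.arg z + 2 * π)

open Classical in
/-- `𝒩_A`: the number of eigenvalue angles of `U` lying in the set `A`. -/
def countAngles (N : ℕ) (U : Matrix.unitaryGroup (Fin N) ℂ) (A : Set ℝ) : ℕ :=
  Multiset.card ((eigenAngles N U).filter (· ∈ A))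

/-- `𝒩_θ`: the number of eigenvalue angles of `U` in `[0, θ]`. -/
def countFun (N : ℕ) (U : Matrix.unitaryGroup (Fin N) ℂ) (θ : ℝ) : ℕ :=
  countAngles N U (Set.Icc 0 θ)

/-- The Kolmogorov distance between the empirical spectral measure of `U` and the
uniform measure on the circle: `sup_{0 ≤ θ < 2π} |𝒩_θ/N - θ/(2π)|`. -/
def dK (N : ℕ) (U : Matrix.unitaryGroup (Fin N) ℂ) : ℝ :=
  ⨆ θ : Set.Ico (0:ℝ) (2 * π), |(countFun N U θ : ℝ) / N - (θ : ℝ) / (2 * π)|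

/-- `max_{1 ≤ k ≤ N} |𝒩_{2πk/N} - k|`. -/
def maxDev (N : ℕ) (U : Matrix.unitaryGroup (Fin N) ℂ) : ℝ :=
  ⨆ k : (Finset.Icc 1 N : Finset ℕ), |(countFun N U (2 * π * (k : ℕ) / N) : ℝ) - ((k : ℕ) : ℝ)|

end

/-!
The power sums `Tr Uᵏ` with `k ≤ n` enter the Fejér-smoothed counting statistic
`T(ω) = ∑ₖ (1 - k / n) / k * ωᵏ * Tr Uᵏ`, whose imaginary part is at most `2πN * d_K` for every `ω`
on the circle: it is a linear statistic of a function with derivative half a Fejér kernel minus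
`1 / 2`, hence of total variation at most `2π`. It is therefore enough that the maximum of `Im T(ω)`
over the `n`-th roots of unity `ω` is of order `log n` with probability bounded below, for some `n`
of order `N`.

Left invariance of Haar measure gives loop equations, from which polynomials of total weight at
most `N` in the power sums have the moments of independent complex Gaussians of variance `k`:
multiplication by `Tr Uᵏ` is adjoint to `k ∂ₖ`. Split `T(ω) = ∑_b Y_b(ω)` over dyadic blocks of
frequencies, and weight Haar measure by the Riesz product `∏_b |1 - (i / 2) Y_b(ω)|²`. Under this
weight each `Im Y_b(ω)` has mean bounded below, so `Im T(ω)` has mean of order `log n` and second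
moment of order `(log n)²`. For separated points `ω` the weights are nearly orthogonal, so the mean
weight over all `ω` has bounded second moment: it does not concentrate on an event of small Haar
probability, on which alone the maximum could be large.
-/

noncomputable section

local notation "U(" N ")" => Matrix.unitaryGroup (Fin N) ℂ
local notation "Mat(" N ")" => Matrix (Fin N) (Fin N) ℂ

section Charpoly

open Polynomial

variable {K n : Type*} [Field K] [IsAlgClosed K] [Fintype n] [DecidableEq n]

lemma card_roots_charpoly (A : Matrix n n K) :
    A.charpoly.roots.card = Fintype.card n := by
  rw [← (IsAlgClosed.splits A.charpoly).natDegree_eq_card_roots, A.charpoly_natDegree_eq_dim]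

lemma det_sub_algebraMap_eq_prod_roots_charpoly (A : Matrix n n K) (a : K) :
    (A - algebraMap K _ a).det = (A.charpoly.roots.map fun z => z - a).prod := by
  have heval : A.charpoly.eval a = (A.charpoly.roots.map fun z => a - z).prod := by
    conv_lhs => rw [(IsAlgClosed.splits A.charpoly).eq_prod_roots_of_monic A.charpoly_monic]
    simp [eval_multiset_prod]
  rw [← neg_sub, Matrix.det_neg, ← card_roots_charpoly A, ← Multiset.card_map (fun z => a - z),
    Matrix.algebraMap_eq_diagonal, Pi.algebraMap_def, Algebra.algebraMap_self, RingHom.id_apply,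
    ← Matrix.scalar_apply, ← Matrix.eval_charpoly, heval, ← Multiset.prod_map_neg, Multiset.map_map]
  simp

lemma det_aeval_eq_prod_roots_charpoly (A : Matrix n n K) (p : K[X]) :
    (aeval A p).det = (A.charpoly.roots.map p.eval).prod := by
  have hdet : ∀ s : Multiset K, (aeval A (s.map fun a => X - C a).prod).det =
      (A.charpoly.roots.map (s.map fun a => X - C a).prod.eval).prod := by
    intro s
    induction s using Multiset.induction with
    | empty => simp
    | cons a s ih =>
      have hfactor : aeval A (X - C a) = A - algebraMap K _ a := by simp
      simp only [Multiset.map_cons, Multiset.prod_cons, map_mul, Matrix.det_mul, ih, eval_mul,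
        Multiset.prod_map_mul, hfactor, det_sub_algebraMap_eq_prod_roots_charpoly, eval_sub, eval_X,
        eval_C]
  rw [(IsAlgClosed.splits p).eq_prod_roots, map_mul, Matrix.det_mul, hdet]
  simp [Matrix.algebraMap_eq_diagonal, card_roots_charpoly]

lemma charpoly_pow_eq_prod_roots (A : Matrix n n K) (k : ℕ) :
    (A ^ k).charpoly = ((A.charpoly.roots.map (· ^ k)).map fun a => X - C a).prod := by
  refine Polynomial.funext fun x => ?_
  have haeval : Matrix.scalar n x - A ^ k = aeval A (C x - X ^ k) := by
    simp [Matrix.algebraMap_eq_diagonal, Matrix.scalar]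
  rw [Matrix.eval_charpoly, haeval, det_aeval_eq_prod_roots_charpoly, eval_multiset_prod]
  simp

lemma trace_pow_eq_sum_roots_charpoly (A : Matrix n n K) (k : ℕ) :
    (A ^ k).trace = (A.charpoly.roots.map (· ^ k)).sum := by
  rw [Matrix.trace_eq_sum_roots_charpoly, charpoly_pow_eq_prod_roots,
    roots_multiset_prod_X_sub_C]

end Charpoly

section EigenAngles

variable {N : ℕ} (U : U(N))

lemma norm_eq_one_of_mem_roots_charpoly_unitary {z : ℂ} (hz : z ∈ (U : Mat(N)).charpoly.roots) :
    ‖z‖ = 1 := by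
  open scoped Matrix.Norms.L2Operator in
  exact spectrum.norm_eq_one_of_unitary U.2
    (Matrix.mem_spectrum_of_isRoot_charpoly (Polynomial.isRoot_of_mem_roots hz))

lemma card_eigenAngles : (eigenAngles N U).card = N := by
  simp [eigenAngles, card_roots_charpoly]

lemma mem_Ico_of_mem_eigenAngles {x : ℝ} (hx : x ∈ eigenAngles N U) : x ∈ Set.Ico 0 (2 * π) := by
  obtain ⟨z, -, rfl⟩ := Multiset.mem_map.1 hx
  have := Complex.neg_pi_lt_arg z
  have := Complex.arg_le_pi z
  split_ifs <;> constructor <;> linarith [pi_pos]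

lemma map_exp_eigenAngles :
    (eigenAngles N U).map (fun x : ℝ => Complex.exp (x * Complex.I)) =
      (U : Mat(N)).charpoly.roots := by
  rw [eigenAngles, Multiset.map_map]
  conv_rhs => rw [← Multiset.map_id (U : Mat(N)).charpoly.roots]
  refine Multiset.map_congr rfl fun z hz => ?_
  have hexp : Complex.exp (z.arg * Complex.I) = z := by
    simpa [norm_eq_one_of_mem_roots_charpoly_unitary U hz] using Complex.norm_mul_exp_arg_mul_I z
  by_cases h : 0 ≤ z.arg
  · simpa only [Function.comp_apply, if_pos h, id] using hexp
  · simpa [-Complex.arg_nonneg_iff, h, add_mul, Complex.exp_add] using hexp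

lemma trace_pow_eq_sum_eigenAngles (k : ℕ) :
    ((U : Mat(N)) ^ k).trace =
      ((eigenAngles N U).map fun x : ℝ => Complex.exp (k * x * Complex.I)).sum := by
  rw [trace_pow_eq_sum_roots_charpoly, ← map_exp_eigenAngles, Multiset.map_map]
  simp only [Function.comp_def, ← Complex.exp_nat_mul, mul_assoc]

end EigenAngles

section Koksma

variable {a b : ℝ} {g g' : ℝ → ℝ}

lemma hasIntegral_indicator_Ici_deriv {x : ℝ} (hx : x ∈ Set.Icc a b)
    (hg : ∀ y, HasDerivAt g (g' y) y) (hg' : Continuous g') :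
    IntervalIntegrable ((Set.Ici x).indicator g') volume a b ∧
      ∫ θ in a..b, (Set.Ici x).indicator g' θ = g b - g x := by
  have hleft : Set.EqOn ((Set.Ici x).indicator g') 0 (Set.uIoo a x) := fun θ hθ => by
    rw [Set.uIoo_of_le hx.1] at hθ
    exact Set.indicator_of_notMem (not_le.2 hθ.2) g'
  have hright : Set.EqOn ((Set.Ici x).indicator g') g' (Set.uIoo x b) := fun θ hθ => by
    rw [Set.uIoo_of_le hx.2] at hθ
    exact Set.indicator_of_mem hθ.1.le g'
  have hint_left : IntervalIntegrable ((Set.Ici x).indicator g') volume a x :=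
    (intervalIntegrable_congr_uIoo hleft).2 IntervalIntegrable.zero
  have hint_right : IntervalIntegrable ((Set.Ici x).indicator g') volume x b :=
    (intervalIntegrable_congr_uIoo hright).2 (hg'.intervalIntegrable _ _)
  refine ⟨hint_left.trans hint_right, ?_⟩
  rw [← intervalIntegral.integral_add_adjacent_intervals hint_left hint_right,
    intervalIntegral.integral_congr_uIoo hleft, intervalIntegral.integral_congr_uIoo hright,
    intervalIntegral.integral_eq_sub_of_hasDerivAt (fun y _ => hg y) (hg'.intervalIntegrable _ _)]
  simp

lemma hasIntegral_countP_mul_deriv {s : Multiset ℝ} (hs : ∀ x ∈ s, x ∈ Set.Icc a b)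
    (hg : ∀ y, HasDerivAt g (g' y) y) (hg' : Continuous g') :
    IntervalIntegrable (fun θ => (s.countP (· ≤ θ) : ℝ) * g' θ) volume a b ∧
      ∫ θ in a..b, (s.countP (· ≤ θ) : ℝ) * g' θ = s.card * g b - (s.map g).sum := by
  induction s using Multiset.induction with
  | empty => simp
  | cons x s ih =>
    obtain ⟨hint, hval⟩ := ih fun y hy => hs y (Multiset.mem_cons_of_mem hy)
    obtain ⟨hint_x, hval_x⟩ :=
      hasIntegral_indicator_Ici_deriv (hs x (Multiset.mem_cons_self x s)) hg hg'
    have hcons : (fun θ => ((x ::ₘ s).countP (· ≤ θ) : ℝ) * g' θ) =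
        fun θ => (Set.Ici x).indicator g' θ + (s.countP (· ≤ θ) : ℝ) * g' θ := by
      funext θ
      by_cases h : x ≤ θ
      · simp [h, add_mul, add_comm]
      · simp [h]
    rw [hcons]
    refine ⟨hint_x.add hint, ?_⟩
    rw [intervalIntegral.integral_add hint_x hint, hval_x, hval]
    simp only [Multiset.card_cons, Nat.cast_succ, Multiset.map_cons, Multiset.sum_cons]
    ring

/-- Koksma's inequality. -/
lemma abs_sum_sub_integral_le_mul_integral_abs_deriv {s : Multiset ℝ} (hab : a < b)
    (hs : ∀ x ∈ s, x ∈ Set.Icc a b) (hg : ∀ y, HasDerivAt g (g' y) y) (hg' : Continuous g')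
    {D : ℝ} (hD : ∀ θ ∈ Set.Ioo a b, |s.countP (· ≤ θ) - s.card * ((θ - a) / (b - a))| ≤ D) :
    |(s.map g).sum - s.card / (b - a) * ∫ θ in a..b, g θ| ≤ D * ∫ θ in a..b, |g' θ| := by
  obtain ⟨hint, hval⟩ := hasIntegral_countP_mul_deriv hs hg hg'
  have hba : b - a ≠ 0 := (sub_pos.2 hab).ne'
  have hint' : IntervalIntegrable (fun θ => s.card * ((θ - a) / (b - a)) * g' θ) volume a b :=
    Continuous.intervalIntegrable (by fun_prop) _ _
  have hparts : ∫ θ in a..b, s.card * ((θ - a) / (b - a)) * g' θ =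
      s.card * g b - s.card / (b - a) * ∫ θ in a..b, g θ := by
    have hlin : ∀ θ ∈ Set.uIcc a b,
        HasDerivAt (fun θ => s.card * ((θ - a) / (b - a))) (s.card / (b - a)) θ := fun θ _ => by
      simpa [div_eq_mul_inv] using
        (((hasDerivAt_id θ).sub_const a).div_const (b - a)).const_mul (s.card : ℝ)
    rw [intervalIntegral.integral_mul_deriv_eq_deriv_mul hlin (fun θ _ => hg θ) (by simp)
      (hg'.intervalIntegrable _ _), intervalIntegral.integral_const_mul]
    simp [hba]
  have hdiff : (s.map g).sum - s.card / (b - a) * ∫ θ in a..b, g θ =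
      -∫ θ in a..b, (s.countP (· ≤ θ) - s.card * ((θ - a) / (b - a))) * g' θ := by
    simp only [sub_mul]
    rw [intervalIntegral.integral_sub hint hint', hval, hparts]
    ring
  rw [hdiff, abs_neg, ← intervalIntegral.integral_const_mul]
  refine (intervalIntegral.abs_integral_le_integral_abs hab.le).trans ?_
  refine intervalIntegral.integral_mono_on_of_le_Ioo hab.le ?_
    (Continuous.intervalIntegrable (by fun_prop) _ _) fun θ hθ => ?_
  · simpa only [sub_mul] using (hint.sub hint').abs
  · rw [abs_mul]
    exact mul_le_mul_of_nonneg_right (hD θ hθ) (abs_nonneg _)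

end Koksma

section Fejer

/-- The Fejér kernel without its constant term, normalised as a cosine polynomial. -/
def fejerKernel (n : ℕ) (y : ℝ) : ℝ :=
  ∑ k ∈ Finset.Ico 1 n, (1 - (k : ℝ) / n) * cos (k * y)

/-- The sine polynomial whose derivative is `fejerKernel n`. -/
def fejerSum (n : ℕ) (y : ℝ) : ℝ :=
  ∑ k ∈ Finset.Ico 1 n, (1 - (k : ℝ) / n) / k * sin (k * y)

lemma add_two_mul_sum_sub_mul_cos (n : ℕ) (y : ℝ) :
    (n : ℝ) + 2 * ∑ k ∈ Finset.Ico 1 n, ((n : ℝ) - k) * cos (k * y) =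
      (∑ j ∈ Finset.range n, cos (j * y)) ^ 2 + (∑ j ∈ Finset.range n, sin (j * y)) ^ 2 := by
  induction n with
  | zero => simp
  | succ n ih =>
    have hsplit : ∑ k ∈ Finset.Ico 1 (n + 1), (((n + 1 : ℕ) : ℝ) - k) * cos (k * y) =
        ∑ k ∈ Finset.Ico 1 n, ((n : ℝ) - k) * cos (k * y) +
          ∑ k ∈ Finset.Ico 1 (n + 1), cos (k * y) := by
      have htop : ∑ k ∈ Finset.Ico 1 n, ((n : ℝ) - k) * cos (k * y) =
          ∑ k ∈ Finset.Ico 1 (n + 1), ((n : ℝ) - k) * cos (k * y) := by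
        refine Finset.sum_subset (Finset.Ico_subset_Ico_right n.le_succ) fun k hk hk' => ?_
        obtain rfl : k = n := by simp only [Finset.mem_Ico] at hk hk'; lia
        simp
      rw [htop, ← Finset.sum_add_distrib]
      refine Finset.sum_congr rfl fun k _ => ?_
      push_cast
      ring
    have hcos_sub : ∑ k ∈ Finset.Ico 1 (n + 1), cos (k * y) = ∑ j ∈ Finset.range n,
        (cos (n * y) * cos (j * y) + sin (n * y) * sin (j * y)) := by
      rw [Finset.sum_Ico_eq_sum_range, ← Finset.sum_range_reflect]
      refine Finset.sum_congr (by simp) fun j hj => ?_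
      have hj' : j < n := by simpa using hj
      rw [← cos_sub, ← sub_mul, ← Nat.cast_sub hj'.le]
      congr 3
      lia
    rw [hsplit, hcos_sub, Finset.sum_add_distrib, ← Finset.mul_sum, ← Finset.mul_sum,
      Finset.sum_range_succ, Finset.sum_range_succ]
    push_cast
    linear_combination ih - cos_sq_add_sin_sq (n * y)

lemma neg_half_le_fejerKernel (n : ℕ) (y : ℝ) : -(1 / 2) ≤ fejerKernel n y := by
  rcases n.eq_zero_or_pos with rfl | hn
  · simp [fejerKernel]
  have hn' : (0 : ℝ) < n := Nat.cast_pos.2 hn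
  have hscale :
      ∑ k ∈ Finset.Ico 1 n, ((n : ℝ) - k) * cos (k * y) = n * fejerKernel n y := by
    rw [fejerKernel, Finset.mul_sum]
    refine Finset.sum_congr rfl fun k _ => ?_
    field_simp
  have hsq : 0 ≤ (n : ℝ) * (1 + 2 * fejerKernel n y) := by
    have h := add_two_mul_sum_sub_mul_cos n y
    rw [hscale] at h
    calc (0 : ℝ) ≤ n + 2 * (n * fejerKernel n y) := by rw [h]; positivity
      _ = n * (1 + 2 * fejerKernel n y) := by ring
  linarith [nonneg_of_mul_nonneg_right hsq hn']

lemma abs_fejerKernel_le (n : ℕ) (y : ℝ) : |fejerKernel n y| ≤ fejerKernel n y + 1 :=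
  abs_le.2 ⟨by linarith [neg_half_le_fejerKernel n y], by linarith⟩

@[fun_prop]
lemma continuous_fejerKernel (n : ℕ) : Continuous (fejerKernel n) := by
  unfold fejerKernel; fun_prop

lemma hasDerivAt_fejerSum (n : ℕ) (y : ℝ) : HasDerivAt (fejerSum n) (fejerKernel n y) y := by
  unfold fejerSum fejerKernel
  refine HasDerivAt.fun_sum fun k hk => ?_
  have hk0 : (k : ℝ) ≠ 0 := Nat.cast_ne_zero.2 (Nat.one_le_iff_ne_zero.1 (Finset.mem_Ico.1 hk).1)
  convert! ((hasDerivAt_id y).const_mul (k : ℝ)).sin.const_mul ((1 - (k : ℝ) / n) / k) using 1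
  simp only [id]
  field_simp

lemma fejerSum_add_two_pi (n : ℕ) (y : ℝ) : fejerSum n (y + 2 * π) = fejerSum n y := by
  simp only [fejerSum, mul_add, sin_add_nat_mul_two_pi]

lemma integral_fejerSum_add (n : ℕ) (φ : ℝ) : ∫ x in 0..2 * π, fejerSum n (x + φ) = 0 := by
  unfold fejerSum
  rw [intervalIntegral.integral_finsetSum fun k _ =>
    Continuous.intervalIntegrable (by fun_prop) _ _]
  refine Finset.sum_eq_zero fun k hk => ?_
  have hk0 : (k : ℝ) ≠ 0 := Nat.cast_ne_zero.2 (Nat.one_le_iff_ne_zero.1 (Finset.mem_Ico.1 hk).1)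
  simp only [mul_add, intervalIntegral.integral_const_mul]
  rw [intervalIntegral.integral_comp_mul_add (f := sin) hk0, integral_sin,
    add_comm (k * (2 * π) : ℝ), cos_add_nat_mul_two_pi]
  simp

lemma integral_abs_fejerKernel_add_le (n : ℕ) (φ : ℝ) :
    ∫ x in 0..2 * π, |fejerKernel n (x + φ)| ≤ 2 * π := by
  have hint : IntervalIntegrable (fun x => fejerKernel n (x + φ)) volume 0 (2 * π) :=
    Continuous.intervalIntegrable (by fun_prop) _ _
  calc ∫ x in 0..2 * π, |fejerKernel n (x + φ)|
      ≤ ∫ x in 0..2 * π, (fejerKernel n (x + φ) + 1) :=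
        intervalIntegral.integral_mono two_pi_pos.le hint.abs (hint.add (by simp))
          fun x => abs_fejerKernel_le n _
    _ = 2 * π := by
        rw [intervalIntegral.integral_add hint (by simp),
          intervalIntegral.integral_eq_sub_of_hasDerivAt
            (fun x _ => (hasDerivAt_fejerSum n _).comp_add_const x φ) hint,
          add_comm (2 * π), fejerSum_add_two_pi]
        simp

lemma im_sum_div_mul_pow_mul_exp (n : ℕ) {ω : ℂ} (hω : ‖ω‖ = 1) (x : ℝ) :
    (∑ k ∈ Finset.Ico 1 n,
      ((1 - k / n) / k : ℝ) * ω ^ k * Complex.exp (k * x * Complex.I)).im =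
        fejerSum n (x + ω.arg) := by
  have hexp : Complex.exp (ω.arg * Complex.I) = ω := by
    simpa [hω] using Complex.norm_mul_exp_arg_mul_I ω
  rw [fejerSum, Complex.im_sum]
  refine Finset.sum_congr rfl fun k _ => ?_
  have hangle : ω ^ k * Complex.exp (k * x * Complex.I) =
      Complex.exp ((k * (x + ω.arg) : ℝ) * Complex.I) := by
    nth_rewrite 1 [← hexp]
    rw [← Complex.exp_nat_mul, ← Complex.exp_add]
    push_cast
    ring_nf
  rw [mul_assoc, hangle, Complex.im_ofReal_mul, Complex.exp_ofReal_mul_I_im]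

end Fejer

section KolmogorovDistance

variable {N : ℕ} (U : U(N))

lemma countFun_eq_countP (θ : ℝ) : countFun N U θ = (eigenAngles N U).countP (· ≤ θ) := by
  rw [Multiset.countP_eq_card_filter]
  unfold countFun countAngles
  congr 1
  convert! Multiset.filter_congr fun x hx => ?_
  simp [(mem_Ico_of_mem_eigenAngles U hx).1]

lemma countFun_le (θ : ℝ) : countFun N U θ ≤ N := by
  rw [countFun_eq_countP]
  exact (Multiset.countP_le_card _ _).trans_eq (card_eigenAngles U)

lemma abs_countFun_div_sub_le_one {θ : ℝ} (hθ : θ ∈ Set.Icc 0 (2 * π)) :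
    |(countFun N U θ : ℝ) / N - θ / (2 * π)| ≤ 1 := by
  have hcount : (countFun N U θ : ℝ) / N ∈ Set.Icc 0 1 :=
    ⟨by positivity, div_le_one_of_le₀ (Nat.cast_le.2 (countFun_le U θ)) (by positivity)⟩
  have hθ' : θ / (2 * π) ∈ Set.Icc 0 1 :=
    ⟨div_nonneg hθ.1 two_pi_pos.le, div_le_one_of_le₀ hθ.2 two_pi_pos.le⟩
  exact abs_le.2 ⟨by linarith [hcount.1, hθ'.2], by linarith [hcount.2, hθ'.1]⟩

lemma bddAbove_range_abs_countFun_div_sub : BddAbove (Set.range fun θ : Set.Ico 0 (2 * π) =>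
    |(countFun N U θ : ℝ) / N - θ / (2 * π)|) :=
  ⟨1, Set.forall_mem_range.2 fun θ => abs_countFun_div_sub_le_one U (Set.Ico_subset_Icc_self θ.2)⟩

lemma abs_countFun_div_sub_le_dK {θ : ℝ} (hθ : θ ∈ Set.Ico 0 (2 * π)) :
    |(countFun N U θ : ℝ) / N - θ / (2 * π)| ≤ dK N U :=
  le_ciSup (bddAbove_range_abs_countFun_div_sub U) ⟨θ, hθ⟩

lemma dK_nonneg : 0 ≤ dK N U :=
  Real.iSup_nonneg fun _ => abs_nonneg _

lemma dK_le_one : dK N U ≤ 1 :=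
  have : Nonempty (Set.Ico 0 (2 * π)) := ⟨⟨0, le_rfl, two_pi_pos⟩⟩
  ciSup_le fun θ => abs_countFun_div_sub_le_one U (Set.Ico_subset_Icc_self θ.2)

-- At `θ = π / N` the uniform measure asks for half an eigenvalue.
lemma one_div_two_mul_le_dK (hN : 0 < N) : 1 / (2 * N) ≤ dK N U := by
  have hN' : (1 : ℝ) ≤ N := Nat.one_le_cast.2 hN
  have hθ : π / N ∈ Set.Ico 0 (2 * π) :=
    ⟨by positivity, (div_le_self pi_pos.le hN').trans_lt (by linarith [pi_pos])⟩
  refine le_trans ?_ (abs_countFun_div_sub_le_dK U hθ)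
  generalize countFun N U (π / N) = m
  have hdev : (m : ℝ) / N - π / N / (2 * π) = (m - 1 / 2) / N := by field_simp
  rw [hdev, abs_div, Nat.abs_cast, ← div_div]
  gcongr
  rcases m.eq_zero_or_pos with rfl | hm
  · norm_num
  · have : (1 : ℝ) ≤ m := Nat.one_le_cast.2 hm
    exact le_abs.2 (Or.inl (by linarith))

lemma abs_sum_eigenAngles_sub_integral_le (hN : 0 < N) {g g' : ℝ → ℝ}
    (hg : ∀ y, HasDerivAt g (g' y) y) (hg' : Continuous g') :
    |((eigenAngles N U).map g).sum - N / (2 * π) * ∫ θ in 0..2 * π, g θ| ≤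
      N * dK N U * ∫ θ in 0..2 * π, |g' θ| := by
  have hD : ∀ θ ∈ Set.Ioo 0 (2 * π), |(eigenAngles N U).countP (· ≤ θ) -
      (eigenAngles N U).card * ((θ - 0) / (2 * π - 0))| ≤ N * dK N U := fun θ hθ => by
    have hfactor : (countFun N U θ : ℝ) - N * (θ / (2 * π)) =
        N * (countFun N U θ / N - θ / (2 * π)) := by field_simp
    rw [← countFun_eq_countP, card_eigenAngles, sub_zero, sub_zero, hfactor, abs_mul, Nat.abs_cast]
    gcongr
    exact abs_countFun_div_sub_le_dK U (Set.Ioo_subset_Ico_self hθ)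
  simpa only [card_eigenAngles, sub_zero] using
    abs_sum_sub_integral_le_mul_integral_abs_deriv two_pi_pos
      (fun x hx => Set.Ico_subset_Icc_self (mem_Ico_of_mem_eigenAngles U hx)) hg hg' hD

lemma im_sum_div_mul_pow_mul_trace_pow_le (hN : 0 < N) (n : ℕ) {ω : ℂ} (hω : ‖ω‖ = 1) :
    (∑ k ∈ Finset.Ico 1 n, ((1 - k / n) / k : ℝ) * ω ^ k * ((U : Mat(N)) ^ k).trace).im ≤
      2 * π * N * dK N U := by
  have hsum : (∑ k ∈ Finset.Ico 1 n,
      ((1 - k / n) / k : ℝ) * ω ^ k * ((U : Mat(N)) ^ k).trace).im =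
        ((eigenAngles N U).map fun x => fejerSum n (x + ω.arg)).sum := by
    simp only [trace_pow_eq_sum_eigenAngles, ← im_sum_div_mul_pow_mul_exp n hω,
      ← Multiset.sum_map_mul_left, ← Multiset.sum_map_sum]
    exact (map_multiset_sum Complex.imAddGroupHom _).trans (by simp)
  have hkoksma := abs_sum_eigenAngles_sub_integral_le U hN
    (fun y => (hasDerivAt_fejerSum n _).comp_add_const y ω.arg) (by fun_prop)
  rw [integral_fejerSum_add, mul_zero, sub_zero] at hkoksma
  calc _ = _ := hsum
    _ ≤ _ := (le_abs_self _).trans hkoksma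
    _ ≤ N * dK N U * (2 * π) := by
      gcongr
      · exact mul_nonneg N.cast_nonneg (dK_nonneg U)
      · exact integral_abs_fejerKernel_add_le n _
    _ = 2 * π * N * dK N U := by ring

end KolmogorovDistance

section Measurability

lemma measurable_iSup_Ico_of_continuousWithinAt {α : Type*} [MeasurableSpace α] {a b : ℝ}
    (hab : a < b) {f : α → ℝ → ℝ} (hf : ∀ θ ∈ Set.Ico a b, Measurable fun x => f x θ)
    (hcont : ∀ x, ∀ θ ∈ Set.Ico a b, ContinuousWithinAt (f x) (Set.Ioi θ) θ)
    (hbdd : ∀ x, BddAbove (Set.range fun θ : Set.Ico a b => f x θ)) :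
    Measurable fun x => ⨆ θ : Set.Ico a b, f x θ := by
  have : Nonempty (Set.Ico a b) := ⟨⟨a, le_rfl, hab⟩⟩
  refine measurable_of_Ioi fun c => ?_
  have hrat : (fun x => ⨆ θ : Set.Ico a b, f x θ) ⁻¹' Set.Ioi c =
      ⋃ q : {q : ℚ // (q : ℝ) ∈ Set.Ico a b}, {x | c < f x q} := by
    ext x
    simp only [Set.mem_preimage, Set.mem_Ioi, Set.mem_iUnion, Set.mem_ofPred_eq]
    refine ⟨fun h => ?_, fun ⟨q, hq⟩ => hq.trans_le (le_ciSup (hbdd x) ⟨q, q.2⟩)⟩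
    obtain ⟨⟨θ, hθ⟩, hc⟩ := exists_lt_of_lt_ciSup h
    have hright : ∀ᶠ q in nhdsWithin θ (Set.Ioi θ), c < f x q ∧ q < b :=
      ((hcont x θ hθ).eventually (lt_mem_nhds hc)).and
        (mem_nhdsWithin_of_mem_nhds (Iio_mem_nhds hθ.2))
    obtain ⟨u, hu, hsub⟩ := mem_nhdsGT_iff_exists_Ioo_subset.1 hright
    obtain ⟨q, hθq, hqu⟩ := exists_rat_btwn (show θ < u from hu)
    obtain ⟨hcq, hqb⟩ := hsub ⟨hθq, hqu⟩
    exact ⟨⟨q, hθ.1.trans hθq.le, hqb⟩, hcq⟩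
  rw [hrat]
  exact MeasurableSet.iUnion fun q => measurableSet_lt measurable_const (hf q q.2)

variable {N : ℕ}

lemma continuous_trace_pow (k : ℕ) : Continuous fun U : U(N) => ((U : Mat(N)) ^ k).trace :=
  (continuous_subtype_val.pow k).matrix_trace

lemma fourier_two_pi_coe_apply (n : ℤ) (x : ℝ) :
    fourier n (x : AddCircle (2 * π)) = Complex.exp (n * x * Complex.I) := by
  rw [fourier_coe_apply]
  have : (π : ℂ) ≠ 0 := Complex.ofReal_ne_zero.2 pi_ne_zero
  push_cast
  field_simp

lemma measurable_sum_fourier_eigenAngles (n : ℤ) : Measurable fun U : U(N) =>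
    ((eigenAngles N U).map fun x : ℝ => fourier n (x : AddCircle (2 * π))).sum := by
  simp only [fourier_two_pi_coe_apply]
  obtain ⟨k, rfl | rfl⟩ := n.eq_nat_or_neg
  · simpa only [trace_pow_eq_sum_eigenAngles, Int.cast_natCast] using
      (continuous_trace_pow k).measurable
  · have hconj : ∀ x : ℝ, Complex.exp ((-(k : ℤ) : ℤ) * x * Complex.I) =
        starRingEnd ℂ (Complex.exp (k * x * Complex.I)) := fun x => by
      simp [← Complex.exp_conj]
    have hmeas : Measurable fun U : U(N) => starRingEnd ℂ (((U : Mat(N)) ^ k).trace) :=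
      (Complex.continuous_conj.comp (continuous_trace_pow k)).measurable
    simpa only [trace_pow_eq_sum_eigenAngles, map_multiset_sum, Multiset.map_map,
      Function.comp_def, hconj] using hmeas

lemma measurable_sum_eigenAngles_of_continuousMap (f : C(AddCircle (2 * π), ℂ)) :
    Measurable fun U : U(N) =>
      ((eigenAngles N U).map fun x : ℝ => f (x : AddCircle (2 * π))).sum := by
  have : Fact (0 < 2 * π) := ⟨two_pi_pos⟩
  have hspan : ∀ g ∈ Submodule.span ℂ (Set.range (@fourier (2 * π))), Measurable fun U : U(N) =>
      ((eigenAngles N U).map fun x : ℝ => g (x : AddCircle (2 * π))).sum := by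
    intro g hg
    induction hg using Submodule.span_induction with
    | mem g hg =>
      obtain ⟨n, rfl⟩ := hg
      exact measurable_sum_fourier_eigenAngles n
    | zero => simp
    | add g h _ _ hg hh =>
      simp only [ContinuousMap.add_apply, Multiset.sum_map_add]
      exact hg.add hh
    | smul c g _ hg =>
      simpa only [ContinuousMap.smul_apply, smul_eq_mul, Multiset.sum_map_mul_left]
        using hg.const_mul c
  have hclosure : f ∈ (Submodule.span ℂ (Set.range (@fourier (2 * π)))).topologicalClosure := by
    rw [span_fourier_closure_eq_top]
    exact Submodule.mem_top
  obtain ⟨g, hg, hlim⟩ := mem_closure_iff_seq_limit.1 hclosure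
  refine measurable_of_tendsto_metrizable (fun n => hspan (g n) (hg n))
    (tendsto_pi_nhds.2 fun U => tendsto_multiset_sum _ fun x _ => ?_)
  exact ((continuous_eval_const (F := C(AddCircle (2 * π), ℂ)) _).tendsto f).comp hlim

open Classical in
lemma measurable_countP_eigenAngles_of_isClosed {K : Set (AddCircle (2 * π))} (hK : IsClosed K) :
    Measurable fun U : U(N) =>
      ((eigenAngles N U).countP fun x : ℝ => (x : AddCircle (2 * π)) ∈ K : ℂ) := by
  have hδ : ∀ n : ℕ, (0 : ℝ) < 1 / (n + 1) := fun n => by positivity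
  let f : ℕ → C(AddCircle (2 * π), ℂ) := fun n =>
    ⟨fun x => (thickenedIndicator (hδ n) K x : ℝ), by fun_prop⟩
  have hlim : ∀ x, Tendsto (fun n => f n x) atTop (nhds (if x ∈ K then 1 else 0)) := fun x => by
    have h := tendsto_pi_nhds.1 (thickenedIndicator_tendsto_indicator_closure hδ
      tendsto_one_div_add_atTop_nhds_zero_nat K) x
    rw [hK.closure_eq] at h
    convert! ((Complex.continuous_ofReal.comp NNReal.continuous_coe).tendsto _).comp h using 2
    by_cases hx : x ∈ K <;> simp [hx]
  have hcount : ∀ s : Multiset ℝ, (s.countP fun x : ℝ => (x : AddCircle (2 * π)) ∈ K : ℂ) =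
      (s.map fun x : ℝ => if (x : AddCircle (2 * π)) ∈ K then (1 : ℂ) else 0).sum := fun s => by
    induction s using Multiset.induction with
    | empty => simp
    | cons x s ih => by_cases hx : (x : AddCircle (2 * π)) ∈ K <;> simp [hx, ih, add_comm]
  simp only [hcount]
  exact measurable_of_tendsto_metrizable
    (fun n => measurable_sum_eigenAngles_of_continuousMap (f n))
    (tendsto_pi_nhds.2 fun U => tendsto_multiset_sum _ fun x _ => hlim x)

lemma measurable_countFun {θ : ℝ} (hθ : θ ∈ Set.Ico 0 (2 * π)) :
    Measurable fun U : U(N) => (countFun N U θ : ℝ) := by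
  classical
  have : Fact (0 < 2 * π) := ⟨two_pi_pos⟩
  have hK : IsClosed (((↑) : ℝ → AddCircle (2 * π)) '' Set.Icc 0 θ) :=
    (isCompact_Icc.image (AddCircle.continuous_mk' (2 * π))).isClosed
  convert! Complex.measurable_re.comp (measurable_countP_eigenAngles_of_isClosed hK) using 2 with U
  rw [Function.comp_apply, Complex.natCast_re, countFun_eq_countP, Nat.cast_inj]
  refine Multiset.countP_congr rfl fun x hx => propext ?_
  obtain ⟨hx0, hx1⟩ := mem_Ico_of_mem_eigenAngles U hx
  refine ⟨fun h => ⟨x, ⟨hx0, h⟩, rfl⟩, fun ⟨y, hy, hyx⟩ => ?_⟩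
  have hxy := (AddCircle.coe_eq_coe_iff_of_mem_Ico (p := 2 * π) (a := 0) (x := y) (y := x)
    ⟨hy.1, by simpa using hy.2.trans_lt hθ.2⟩ ⟨hx0, by simpa using hx1⟩).1 hyx
  exact hxy ▸ hy.2

lemma eventually_countFun_eq (U : U(N)) (θ : ℝ) :
    ∀ᶠ q in nhdsWithin θ (Set.Ioi θ), countFun N U q = countFun N U θ := by
  have hmem : ∀ᶠ q in nhdsWithin θ (Set.Ioi θ), ∀ x ∈ (eigenAngles N U).toFinset,
      (x ≤ q ↔ x ≤ θ) := by
    refine (Filter.eventually_all_finset _).2 fun x _ => ?_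
    by_cases hx : x ≤ θ
    · filter_upwards [self_mem_nhdsWithin] with q hq
      exact iff_of_true (hx.trans (le_of_lt hq)) hx
    · filter_upwards [mem_nhdsWithin_of_mem_nhds (Iio_mem_nhds (not_le.1 hx))] with q hq
      exact iff_of_false (not_le.2 hq) hx
  filter_upwards [hmem] with q hq
  simp only [countFun_eq_countP]
  exact Multiset.countP_congr rfl fun x hx => propext (hq x (Multiset.mem_toFinset.2 hx))

lemma measurable_dK : Measurable (dK N) := by
  refine measurable_iSup_Ico_of_continuousWithinAt two_pi_pos
    (f := fun U θ => |(countFun N U θ : ℝ) / N - θ / (2 * π)|) (fun θ hθ => ?_)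
    (fun U θ _ => ?_) bddAbove_range_abs_countFun_div_sub
  · have := measurable_countFun (N := N) hθ
    fun_prop
  · have hcount : ContinuousWithinAt (fun q => (countFun N U q : ℝ)) (Set.Ioi θ) θ :=
      tendsto_const_nhds.congr' <|
        (eventually_countFun_eq U θ).mono fun q hq => congrArg Nat.cast hq.symm
    exact ((hcount.div_const _).sub (by fun_prop)).abs

lemma integrable_dK (ℙ : Measure U(N)) [IsFiniteMeasure ℙ] : Integrable (dK N) ℙ :=
  Integrable.of_bound measurable_dK.aestronglyMeasurable 1 <| Eventually.of_forall fun U =>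
    (abs_of_nonneg (dK_nonneg U)).trans_le (dK_le_one U)

end Measurability

lemma integrable_of_continuous {X E : Type*} [TopologicalSpace X] [CompactSpace X]
    [MeasurableSpace X] [OpensMeasurableSpace X] [NormedAddCommGroup E] {f : X → E}
    (hf : Continuous f) (μ : Measure X) [IsFiniteMeasureOnCompacts μ] : Integrable f μ :=
  hf.integrable_of_hasCompactSupport (HasCompactSupport.of_compactSpace f)

section OneParameterSubgroup

variable {G E : Type*} [Group G] [NormedAddCommGroup E] [NormedSpace ℝ E]

lemma hasDerivAt_comp_addChar_mul {φ : AddChar ℝ G} {f f' : G → E}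
    (h : ∀ x, HasDerivAt (fun t => f (φ t * x)) (f' x) 0) (x : G) (t : ℝ) :
    HasDerivAt (fun t => f (φ t * x)) (f' (φ t * x)) t := by
  have hshift : (fun s => f (φ s * x)) = fun s => f (φ (s - t) * (φ t * x)) := by
    funext s
    rw [← mul_assoc, ← AddChar.map_add_eq_mul, sub_add_cancel]
  rw [hshift]
  exact HasDerivAt.comp_sub_const (f := fun s => f (φ s * (φ t * x))) t t
    (by simpa using h (φ t * x))

variable [TopologicalSpace G] [IsTopologicalGroup G] [CompactSpace G] [MeasurableSpace G]
  [BorelSpace G]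

lemma integral_deriv_addChar_mul_eq_zero (μ : Measure G) [IsFiniteMeasure μ]
    [μ.IsMulLeftInvariant] (φ : AddChar ℝ G) {f f' : G → E} (hf : Continuous f)
    (hf' : Continuous f') (h : ∀ x, HasDerivAt (fun t => f (φ t * x)) (f' x) 0) :
    ∫ x, f' x ∂μ = 0 := by
  have hint {g : G → E} (hg : Continuous g) (t : ℝ) : Integrable (fun x => g (φ t * x)) μ :=
    integrable_of_continuous (hg.comp (continuous_const_mul _)) μ
  obtain ⟨C, hC⟩ := (isCompact_range hf').isBounded.exists_norm_le
  have hderiv : HasDerivAt (fun t : ℝ => ∫ x, f (φ t * x) ∂μ) (∫ x, f' (φ 0 * x) ∂μ) 0 :=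
    (hasDerivAt_integral_of_dominated_loc_of_deriv_le (bound := fun _ => C) univ_mem
      (.of_forall fun t => (hint hf t).aestronglyMeasurable) (hint hf 0)
      (hint hf' 0).aestronglyMeasurable (.of_forall fun _ _ _ => hC _ ⟨_, rfl⟩)
      (integrable_const C)
      (.of_forall fun x t _ => hasDerivAt_comp_addChar_mul h x t)).2
  simp only [integral_mul_left_eq_self f, AddChar.map_zero_eq_one, one_mul] at hderiv
  exact hderiv.unique (hasDerivAt_const _ _)

end OneParameterSubgroup

section LieGradient

variable {N : ℕ}

instance : CompactSpace U(N) := by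
  refine isCompact_iff_compactSpace.1 <| (isCompact_univ_pi fun _ => isCompact_univ_pi fun _ =>
    isCompact_closedBall (0 : ℂ) 1).of_isClosed_subset (isClosed_unitary (R := Mat(N))) ?_
  exact fun A hA i _ j _ => mem_closedBall_zero_iff.2 (entry_norm_bound_of_unitary hA i j)

/-- The one-parameter subgroup `t ↦ exp (t X)` of `U(N)` generated by a skew-Hermitian matrix. -/
def skewExp (X : skewAdjoint Mat(N)) : AddChar ℝ U(N) where
  toFun t := ⟨NormedSpace.exp (t • (X : Mat(N))), by
    rw [Matrix.mem_unitaryGroup_iff', Matrix.star_eq_conjTranspose, ← Matrix.exp_conjTranspose,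
      ← Matrix.star_eq_conjTranspose, star_smul, skewAdjoint.mem_iff.1 X.2, star_trivial, smul_neg,
      ← Matrix.exp_add_of_commute _ _ (Commute.refl (t • (X : Mat(N)))).neg_left, neg_add_cancel,
      NormedSpace.exp_zero]⟩
  map_zero_eq_one' := Subtype.ext <| by simp
  map_add_eq_mul' s t := Subtype.ext <| by
    simp only [Submonoid.coe_mul, add_smul]
    exact Matrix.exp_add_of_commute _ _ (((Commute.refl _).smul_left s).smul_right t)

/-- `G` is a gradient of `f` along the left translation action of the Lie algebra of `U(N)`:
the derivative of `f` at `V` in the direction `X V` is `Tr (X G(V))`. -/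
def HasLieGradient (f : C(U(N), ℂ)) (G : C(U(N), Mat(N))) : Prop :=
  ∀ (X : skewAdjoint Mat(N)) (V : U(N)),
    HasDerivAt (fun t => f (skewExp X t * V)) ((X : Mat(N)) * G V).trace 0

/-- The inclusion of `U(N)` into the matrices, as a continuous function. -/
def matrixCoe (N : ℕ) : C(U(N), Mat(N)) := ⟨Subtype.val, continuous_subtype_val⟩

lemma matrixCoe_apply (V : U(N)) : matrixCoe N V = V := rfl

/-- The entries of a continuous matrix-valued function. -/
def entry (F : C(U(N), Mat(N))) (i j : Fin N) : C(U(N), ℂ) :=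
  ⟨fun V => F V i j, F.continuous.matrix_elem i j⟩

/-- The power sum `V ↦ Tr (V ^ k)` of the eigenvalues. -/
def powerSum (N k : ℕ) : C(U(N), ℂ) := ⟨fun V => ((V : Mat(N)) ^ k).trace, continuous_trace_pow k⟩

lemma powerSum_apply (k : ℕ) (V : U(N)) : powerSum N k V = ((V : Mat(N)) ^ k).trace := rfl

/-- The product `p_s = ∏_{m ∈ s} p_m` of power sums. -/
def powerSumProd (N : ℕ) (s : Multiset ℕ) : C(U(N), ℂ) := (s.map (powerSum N)).prod

lemma powerSumProd_cons (a : ℕ) (s : Multiset ℕ) :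
    powerSumProd N (a ::ₘ s) = powerSum N a * powerSumProd N s := by
  simp [powerSumProd]

namespace HasLieGradient

variable {f g : C(U(N), ℂ)} {F G : C(U(N), Mat(N))}

lemma mul (hf : HasLieGradient f F) (hg : HasLieGradient g G) :
    HasLieGradient (f * g) (f • G + g • F) := fun X V => by
  refine ((hf X V).fun_mul (hg X V)).congr_deriv ?_
  simp [mul_add, add_comm, mul_comm]

lemma star (hf : HasLieGradient f F) : HasLieGradient (star f) (-star F) := fun X V => by
  refine (hf X V).star.congr_deriv ?_
  have hX : (X : Mat(N)).conjTranspose = -X := skewAdjoint.mem_iff.1 X.2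
  rw [← Matrix.trace_conjTranspose, Matrix.conjTranspose_mul, hX, Matrix.trace_mul_comm]
  simp [Matrix.star_eq_conjTranspose]

lemma sum {ι : Type*} {s : Finset ι} {f : ι → C(U(N), ℂ)} {F : ι → C(U(N), Mat(N))}
    (h : ∀ i ∈ s, HasLieGradient (f i) (F i)) :
    HasLieGradient (∑ i ∈ s, f i) (∑ i ∈ s, F i) := fun X V => by
  simpa only [ContinuousMap.sum_apply, Matrix.mul_sum, Matrix.trace_sum] using
    HasDerivAt.fun_sum fun i hi => h i hi X V

lemma multiset_prod {ι : Type*} [DecidableEq ι] {f : ι → C(U(N), ℂ)} {F : ι → C(U(N), Mat(N))}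
    (h : ∀ i, HasLieGradient (f i) (F i)) (s : Multiset ι) :
    HasLieGradient (s.map f).prod (s.map fun i => ((s.erase i).map f).prod • F i).sum := by
  induction s using Multiset.induction with
  | empty => exact fun X V => by simpa using hasDerivAt_const (0 : ℝ) (1 : ℂ)
  | cons a s ih =>
    have herase : (s.map fun i => (((a ::ₘ s).erase i).map f).prod • F i) =
        s.map fun i => f a • ((s.erase i).map f).prod • F i :=
      Multiset.map_congr rfl fun i hi => by
        rw [Multiset.erase_cons_tail_of_mem hi, Multiset.map_cons, Multiset.prod_cons, mul_smul]
    rw [Multiset.map_cons, Multiset.prod_cons, Multiset.map_cons, Multiset.sum_cons, herase,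
      Multiset.erase_cons_head, add_comm]
    simpa only [Multiset.smul_sum, Multiset.map_map, Function.comp_def] using (h a).mul ih

-- Both sides are `ℂ`-linear in the direction, and every matrix is a complex combination of two
-- skew-Hermitian ones.
lemma integral_entry_eq_zero (hf : HasLieGradient f F) (ℙ : Measure U(N)) [IsFiniteMeasure ℙ]
    [ℙ.IsMulLeftInvariant] (i j : Fin N) : ∫ V, F V i j ∂ℙ = 0 := by
  have hcont (X : Mat(N)) : Continuous fun V => (X * F V).trace :=
    (continuous_const.matrix_mul F.continuous).matrix_trace
  have hskew (X : skewAdjoint Mat(N)) : ∫ V, ((X : Mat(N)) * F V).trace ∂ℙ = 0 :=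
    integral_deriv_addChar_mul_eq_zero ℙ (skewExp X) f.continuous (hcont X) (hf X)
  have hself (X : selfAdjoint Mat(N)) : ∫ V, ((X : Mat(N)) * F V).trace ∂ℙ = 0 := by
    have h := hskew ⟨Complex.I • X, Complex.I_smul_mem_skewAdjoint_iff_isSelfAdjoint.2 X.2⟩
    simpa [integral_const_mul] using h
  have hint (X : Mat(N)) : Integrable (fun V => (X * F V).trace) ℙ :=
    integrable_of_continuous (hcont X) ℙ
  have hall (X : Mat(N)) : ∫ V, (X * F V).trace ∂ℙ = 0 := by
    rw [← StarModule.selfAdjointPart_add_skewAdjointPart (R := ℝ) X]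
    simp only [add_mul, Matrix.trace_add]
    rw [integral_add (hint _) (hint _), hself, hskew, add_zero]
  simpa only [Matrix.trace_single_mul, one_smul] using hall (Matrix.single j i 1)

end HasLieGradient

lemma hasDerivAt_clm_exp_smul_mul_pow {A E : Type*} [NormedRing A] [NormedAlgebra ℝ A]
    [CompleteSpace A] [NormedAddCommGroup E] [NormedSpace ℝ E] (L : A →L[ℝ] E) (X W : A) (k : ℕ) :
    HasDerivAt (fun t : ℝ => L ((NormedSpace.exp (t • X) * W) ^ k))
      (L (∑ l ∈ Finset.range k, W ^ (k - 1 - l) * (X * W) * W ^ l)) 0 := by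
  have hexp : HasDerivAt (fun t : ℝ => NormedSpace.exp (t • X) * W) (X * W) 0 := by
    simpa using (hasDerivAt_exp_smul_const X (0 : ℝ)).mul_const W
  exact (L.hasFDerivAt.comp_hasDerivAt (0 : ℝ) (hexp.pow' k)).congr_deriv (by simp)

lemma hasLieGradient_entry_pow (k : ℕ) (i j : Fin N) :
    HasLieGradient (entry (matrixCoe N ^ k) i j) (∑ l ∈ Finset.range k, matrixCoe N ^ (l + 1) *
      .const _ (Matrix.single j i 1) * matrixCoe N ^ (k - 1 - l)) := fun X V => by
  let _ : NormedRing Mat(N) := Matrix.linftyOpNormedRing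
  let _ : NormedAlgebra ℝ Mat(N) := Matrix.linftyOpNormedAlgebra
  convert! hasDerivAt_clm_exp_smul_mul_pow (Matrix.entryLinearMap ℝ ℂ i j).toContinuousLinearMap
    (X : Mat(N)) (V : Mat(N)) k using 1
  have htrace (l : ℕ) : ((X : Mat(N)) * ((V : Mat(N)) ^ (l + 1) * Matrix.single j i 1 *
      (V : Mat(N)) ^ (k - 1 - l))).trace =
      ((V : Mat(N)) ^ (k - 1 - l) * (X * V) * (V : Mat(N)) ^ l) i j := by
    rw [← Matrix.mul_assoc, Matrix.trace_mul_comm, ← Matrix.mul_assoc, ← Matrix.mul_assoc,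
      Matrix.trace_mul_single, MulOpposite.op_one, one_smul, pow_succ']
    simp only [Matrix.mul_assoc]
  simp only [ContinuousMap.sum_apply, ContinuousMap.mul_apply, ContinuousMap.pow_apply,
    ContinuousMap.const_apply, matrixCoe_apply, Matrix.mul_sum, Matrix.trace_sum, htrace]
  exact (Matrix.sum_apply i j _ _).symm

lemma hasLieGradient_powerSum (k : ℕ) : HasLieGradient (powerSum N k) (k • matrixCoe N ^ k) := by
  have hsum : powerSum N k = ∑ i, entry (matrixCoe N ^ k) i i := by
    ext V
    simp [powerSum, entry, matrixCoe, Matrix.trace]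
  rw [hsum]
  convert! HasLieGradient.sum fun i (_ : i ∈ Finset.univ) => hasLieGradient_entry_pow k i i using 1
  ext V : 1
  rw [ContinuousMap.sum_apply]
  simp only [ContinuousMap.sum_apply, ContinuousMap.mul_apply, ContinuousMap.const_apply]
  rw [Finset.sum_comm, Finset.sum_congr rfl (g := fun _ => (matrixCoe N ^ k) V)]
  · simp
  intro l hl
  rw [← Finset.sum_mul, ← Finset.mul_sum, Matrix.sum_single_one, mul_one,
    ← ContinuousMap.mul_apply, ← pow_add]
  congr 2
  have := Finset.mem_range.1 hl
  omega

end LieGradient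

section LoopEquation

variable {N : ℕ} {f : C(U(N), ℂ)} {F : C(U(N), Mat(N))}

lemma HasLieGradient.sum_sum_entry_pow_mul (k : ℕ) (V : U(N)) :
    ∑ i, ∑ j, (entry (matrixCoe N ^ k) i j • F + f • ∑ l ∈ Finset.range k, matrixCoe N ^ (l + 1) *
      .const _ (Matrix.single j i 1) * matrixCoe N ^ (k - 1 - l)) V j i =
    (∑ l ∈ Finset.range k, powerSum N (l + 1) V * powerSum N (k - 1 - l) V) * f V +
      ((V : Mat(N)) ^ k * F V).trace := by
  have hsingle (A B : Mat(N)) (i j : Fin N) :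
      (A * Matrix.single j i 1 * B : Mat(N)) j i = A j j * B i i := by
    rw [Matrix.mul_apply, Finset.sum_eq_single i] <;> simp +contextual
  have hcut (l : ℕ) : powerSum N (l + 1) V * powerSum N (k - 1 - l) V =
      ∑ i, ∑ j, ((V : Mat(N)) ^ (l + 1)) j j * ((V : Mat(N)) ^ (k - 1 - l)) i i := by
    rw [Finset.sum_comm, ← Finset.sum_mul_sum]
    rfl
  simp only [ContinuousMap.add_apply, ContinuousMap.smul_apply', ContinuousMap.sum_apply,
    ContinuousMap.mul_apply, ContinuousMap.pow_apply, ContinuousMap.const_apply, matrixCoe_apply,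
    Matrix.add_apply, Matrix.smul_apply, Matrix.sum_apply, hsingle, Finset.sum_add_distrib,
    smul_eq_mul, ← Finset.mul_sum]
  rw [add_comm, mul_comm]
  congr 2
  simp only [hcut]
  rw [Finset.sum_congr rfl fun i _ => Finset.sum_comm, Finset.sum_comm]

lemma HasLieGradient.integral_loop (hf : HasLieGradient f F) (ℙ : Measure U(N))
    [IsFiniteMeasure ℙ] [ℙ.IsMulLeftInvariant] (k : ℕ) :
    ∫ V, ((∑ l ∈ Finset.range k, powerSum N (l + 1) V * powerSum N (k - 1 - l) V) * f V +
      ((V : Mat(N)) ^ k * F V).trace) ∂ℙ = 0 := by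
  simp_rw [← sum_sum_entry_pow_mul]
  have hint (G : C(U(N), Mat(N))) (i j : Fin N) : Integrable (fun V => G V i j) ℙ :=
    integrable_of_continuous (entry G i j).continuous ℙ
  rw [integral_finsetSum _ fun i _ => integrable_finsetSum _ fun j _ => hint _ j i]
  refine Finset.sum_eq_zero fun i _ => ?_
  rw [integral_finsetSum _ fun j _ => hint _ j i]
  exact Finset.sum_eq_zero fun j _ =>
    ((hasLieGradient_entry_pow k i j).mul hf).integral_entry_eq_zero ℙ j i

lemma trace_pow_mul_star_pow (V : U(N)) (k m : ℕ) :
    ((V : Mat(N)) ^ k * star ((V : Mat(N)) ^ m)).trace =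
      if m ≤ k then powerSum N (k - m) V else star (powerSum N (m - k) V) := by
  have hpow (n : ℕ) : (V : Mat(N)) ^ n * star ((V : Mat(N)) ^ n) = 1 :=
    Matrix.mem_unitaryGroup_iff.1 (V ^ n).2
  have hpow' (n : ℕ) : star ((V : Mat(N)) ^ n) * (V : Mat(N)) ^ n = 1 :=
    Matrix.mem_unitaryGroup_iff'.1 (V ^ n).2
  split_ifs with h
  · obtain ⟨d, rfl⟩ := Nat.exists_eq_add_of_le' h
    rw [pow_add, mul_assoc, hpow, mul_one, Nat.add_sub_cancel, powerSum_apply]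
  · obtain ⟨d, rfl⟩ := Nat.exists_eq_add_of_le (not_le.1 h).le
    rw [pow_add, star_mul, Matrix.trace_mul_comm, mul_assoc, hpow', mul_one,
      Nat.add_sub_cancel_left, Matrix.star_eq_conjTranspose, Matrix.trace_conjTranspose,
      powerSum_apply]

lemma powerSum_zero : powerSum N 0 = (N : ℂ) • (1 : C(U(N), ℂ)) := by
  ext V
  simp [powerSum]

lemma multiset_sum_map_apply {ι X M : Type*} [TopologicalSpace X] [TopologicalSpace M]
    [AddCommMonoid M] [ContinuousAdd M] (s : Multiset ι) (G : ι → C(X, M)) (x : X) :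
    (s.map G).sum x = (s.map fun i => G i x).sum := by
  induction s using Multiset.induction with
  | empty => rfl
  | cons a s ih => simp [ih]

/-- The Lie gradient of the product of power sums `p_s`. -/
def powerSumProdGradient (N : ℕ) (s : Multiset ℕ) : C(U(N), Mat(N)) :=
  (s.map fun m => powerSumProd N (s.erase m) • m • matrixCoe N ^ m).sum

lemma hasLieGradient_powerSumProd (s : Multiset ℕ) :
    HasLieGradient (powerSumProd N s) (powerSumProdGradient N s) :=
  .multiset_prod (fun m => hasLieGradient_powerSum m) s

lemma powerSumProdGradient_apply (s : Multiset ℕ) (V : U(N)) :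
    powerSumProdGradient N s V =
      (s.map fun m => powerSumProd N (s.erase m) V • m • (V : Mat(N)) ^ m).sum :=
  multiset_sum_map_apply _ _ _

lemma trace_pow_mul_powerSumProdGradient (k : ℕ) (s : Multiset ℕ) (V : U(N)) :
    ((V : Mat(N)) ^ k * powerSumProdGradient N s V).trace =
      (s.map fun m => m * powerSumProd N ((k + m) ::ₘ s.erase m) V).sum := by
  rw [powerSumProdGradient_apply]
  refine (map_multiset_sum ((Matrix.traceAddMonoidHom (Fin N) ℂ).comp
    (AddMonoidHom.mulLeft ((V : Mat(N)) ^ k))) _).trans ?_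
  rw [Multiset.map_map]
  congr 1
  refine Multiset.map_congr rfl fun m _ => ?_
  simp only [Function.comp_apply, AddMonoidHom.comp_apply, AddMonoidHom.coe_mulLeft,
    Matrix.mul_smul, ← pow_add, Matrix.traceAddMonoidHom_apply, Matrix.trace_smul,
    powerSumProd_cons, ContinuousMap.mul_apply, powerSum_apply]
  rw [smul_eq_mul, nsmul_eq_mul]
  ring

lemma powerSumProd_mul_trace_pow_mul_star_powerSumProdGradient (k : ℕ) (s t : Multiset ℕ)
    (V : U(N)) :
    powerSumProd N s V * ((V : Mat(N)) ^ k * star (powerSumProdGradient N t V)).trace =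
      (t.map fun m => m *
        (if m ≤ k then powerSumProd N ((k - m) ::ₘ s) * star (powerSumProd N (t.erase m)) else
          powerSumProd N s * star (powerSumProd N ((m - k) ::ₘ t.erase m))) V).sum := by
  rw [powerSumProdGradient_apply]
  refine (map_multiset_sum ((AddMonoidHom.mulLeft (powerSumProd N s V)).comp <|
    (Matrix.traceAddMonoidHom (Fin N) ℂ).comp <| (AddMonoidHom.mulLeft ((V : Mat(N)) ^ k)).comp
      (starAddEquiv : Mat(N) ≃+ Mat(N)).toAddMonoidHom) _).trans ?_
  rw [Multiset.map_map]
  congr 1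
  refine Multiset.map_congr rfl fun m _ => ?_
  simp only [Function.comp_apply, AddMonoidHom.comp_apply, AddMonoidHom.coe_mulLeft,
    AddEquiv.toAddMonoidHom_eq_coe, AddMonoidHom.coe_coe, starAddEquiv_apply,
    star_smul, Matrix.mul_smul, Matrix.traceAddMonoidHom_apply, Matrix.trace_smul, star_trivial,
    trace_pow_mul_star_pow]
  rw [smul_eq_mul, nsmul_eq_mul]
  split_ifs <;>
    simp only [powerSumProd_cons, ContinuousMap.mul_apply, ContinuousMap.star_apply, star_mul'] <;>
    ring

/-- The integral against `ℙ`, as a linear functional on the continuous functions on `U(N)`. -/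
def expectation (ℙ : Measure U(N)) [IsFiniteMeasure ℙ] : C(U(N), ℂ) →ₗ[ℂ] ℂ where
  toFun f := ∫ V, f V ∂ℙ
  map_add' f g := integral_add (integrable_of_continuous f.continuous ℙ)
    (integrable_of_continuous g.continuous ℙ)
  map_smul' c f := integral_smul c f

variable (ℙ : Measure U(N)) [IsFiniteMeasure ℙ]

lemma expectation_star (f : C(U(N), ℂ)) : expectation ℙ (star f) = star (expectation ℙ f) :=
  integral_conj

/-- The mixed moment `E[p_s * conj p_t]` of power sums. -/
def moment (s t : Multiset ℕ) : ℂ := expectation ℙ (powerSumProd N s * star (powerSumProd N t))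

lemma star_moment (s t : Multiset ℕ) : star (moment ℙ s t) = moment ℙ t s := by
  rw [moment, moment, ← expectation_star, star_mul', star_star, mul_comm]

lemma moment_zero_cons (s t : Multiset ℕ) : moment ℙ (0 ::ₘ s) t = N * moment ℙ s t := by
  rw [moment, powerSumProd_cons, powerSum_zero, smul_mul_assoc, one_mul, smul_mul_assoc, map_smul,
    smul_eq_mul, moment]

theorem moment_loop_equation [ℙ.IsMulLeftInvariant] (k : ℕ) (s t : Multiset ℕ) :
    ∑ l ∈ Finset.range k, moment ℙ ((l + 1) ::ₘ (k - 1 - l) ::ₘ s) t +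
      (s.map fun m => m * moment ℙ ((k + m) ::ₘ s.erase m) t).sum =
    (t.map fun m => m * if m ≤ k then moment ℙ ((k - m) ::ₘ s) (t.erase m) else
      moment ℙ s ((m - k) ::ₘ t.erase m)).sum := by
  have hloop := ((hasLieGradient_powerSumProd s).mul
    (hasLieGradient_powerSumProd t).star).integral_loop ℙ k
  let loop : C(U(N), ℂ) :=
    ∑ l ∈ Finset.range k,
        powerSumProd N ((l + 1) ::ₘ (k - 1 - l) ::ₘ s) * star (powerSumProd N t) +
      (s.map fun m : ℕ => (m : ℂ) •
        (powerSumProd N ((k + m) ::ₘ s.erase m) * star (powerSumProd N t))).sum -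
      (t.map fun m : ℕ => (m : ℂ) •
        if m ≤ k then powerSumProd N ((k - m) ::ₘ s) * star (powerSumProd N (t.erase m)) else
          powerSumProd N s * star (powerSumProd N ((m - k) ::ₘ t.erase m))).sum
  have hzero : expectation ℙ loop = 0 := by
    rw [← hloop]
    refine integral_congr_ae (.of_forall fun V => ?_)
    simp only [loop, ContinuousMap.add_apply, ContinuousMap.sub_apply, ContinuousMap.smul_apply,
      ContinuousMap.sum_apply, multiset_sum_map_apply, smul_eq_mul,
      ← powerSumProd_mul_trace_pow_mul_star_powerSumProdGradient]
    simp only [powerSumProd_cons, ContinuousMap.smul_apply', ContinuousMap.mul_apply,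
      ContinuousMap.neg_apply, ContinuousMap.star_apply, mul_add, mul_neg, Matrix.mul_smul,
      Matrix.trace_add, Matrix.trace_neg, Matrix.trace_smul, smul_eq_mul, ← mul_assoc,
      trace_pow_mul_powerSumProdGradient, ← Finset.sum_mul, Multiset.sum_map_mul_right]
    ring
  simp only [loop, map_sub, map_add, map_sum, map_multiset_sum, Multiset.map_map, Function.comp_def,
    map_smul, smul_eq_mul, apply_ite (expectation ℙ)] at hzero
  exact sub_eq_zero.1 hzero

end LoopEquation

section CutAndJoin

lemma sum_map_eq_sum_range_count_mul {R : Type*} [Semiring R] {s : Multiset ℕ} {K : ℕ}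
    (hK : s.sum ≤ K) {f : ℕ → R} (hf : f 0 = 0) :
    (s.map f).sum = ∑ i ∈ Finset.range K, (s.count (i + 1) : R) * f (i + 1) := by
  have hsub : s.toFinset ⊆ Finset.range (K + 1) := fun m hm => by
    have := Multiset.single_le_sum (fun _ _ => Nat.zero_le _) m (Multiset.mem_toFinset.1 hm)
    exact Finset.mem_range.2 (by omega)
  rw [Finset.sum_multiset_map_count, Finset.sum_subset hsub, Finset.sum_range_succ', hf, smul_zero,
    add_zero]
  · simp only [nsmul_eq_mul]
  · intro m _ hm
    rw [Multiset.count_eq_zero.2 (mt Multiset.mem_toFinset.2 hm), zero_smul]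

lemma finite_setOf_add_sum_eq (d : ℕ) :
    {x : ℕ × Multiset ℕ | 0 ∉ x.2 ∧ x.1 + 1 + x.2.sum = d}.Finite := by
  refine (Set.finite_range fun x : Σ k : Fin d, (d - (k + 1)).Partition =>
    ((x.1 : ℕ), x.2.parts)).subset ?_
  rintro ⟨k, s⟩ ⟨hs, hd⟩
  exact ⟨⟨⟨k, by dsimp at hd; omega⟩, s, fun hi => Nat.pos_of_ne_zero fun h => hs (h ▸ hi),
    by dsimp at hd ⊢; omega⟩, rfl⟩

lemma erase_add_sum {s : Multiset ℕ} {m : ℕ} (hm : m ∈ s) : m + (s.erase m).sum = s.sum := by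
  rw [← Multiset.sum_cons, Multiset.cons_erase hm]

-- The right-hand side has total weight `d - 1 < N`, so a solution of maximal norm vanishes.
lemma eq_zero_of_cut_join_recursion {E : Type*} [NormedAddCommGroup E] [NormedSpace ℝ E] {N d : ℕ}
    (hdN : d ≤ N) {δ : ℕ → Multiset ℕ → E}
    (hδ : ∀ k s, 0 ∉ s → k + 1 + s.sum = d → N • δ (k + 1) s =
      -∑ l ∈ Finset.range k, δ (l + 1) ((k - l) ::ₘ s) -
        (s.map fun m => m • δ (k + m + 1) (s.erase m)).sum)
    {k : ℕ} {s : Multiset ℕ} (hs : 0 ∉ s) (hd : k + 1 + s.sum = d) : δ (k + 1) s = 0 := by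
  obtain ⟨⟨k₀, s₀⟩, ⟨hs₀, hd₀⟩, hmax⟩ := Set.exists_max_image _ (fun x => ‖δ (x.1 + 1) x.2‖)
    (finite_setOf_add_sum_eq d) ⟨(k, s), hs, hd⟩
  set M := ‖δ (k₀ + 1) s₀‖
  have hcut : ‖∑ l ∈ Finset.range k₀, δ (l + 1) ((k₀ - l) ::ₘ s₀)‖ ≤ k₀ * M := by
    refine (norm_sum_le_of_le _ fun l hl => hmax (l, (k₀ - l) ::ₘ s₀) ?_).trans (by simp)
    have hl := Finset.mem_range.1 hl
    refine ⟨?_, by dsimp at hd₀ ⊢; rw [Multiset.sum_cons]; omega⟩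
    rw [Multiset.mem_cons, not_or]
    exact ⟨by omega, hs₀⟩
  have hjoin : ‖(s₀.map fun m => m • δ (k₀ + m + 1) (s₀.erase m)).sum‖ ≤ s₀.sum * M := by
    rw [Nat.cast_multiset_sum, ← Multiset.sum_map_mul_right]
    refine (norm_multiset_sum_le _).trans ?_
    rw [Multiset.map_map]
    refine Multiset.sum_map_le_sum_map _ _ fun m hm => ?_
    rw [Function.comp_apply, RCLike.norm_nsmul ℝ, nsmul_eq_mul]
    gcongr
    have := erase_add_sum hm
    exact hmax (k₀ + m, s₀.erase m) ⟨fun h => hs₀ (Multiset.mem_of_mem_erase h),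
      by dsimp at hd₀ ⊢; omega⟩
  have hM : N * M ≤ (d - 1) * M := calc
    N * M = ‖N • δ (k₀ + 1) s₀‖ := by rw [RCLike.norm_nsmul ℝ, nsmul_eq_mul]
    _ ≤ k₀ * M + s₀.sum * M := by
      rw [hδ k₀ s₀ hs₀ hd₀]
      exact (norm_sub_le _ _).trans (add_le_add (by rwa [norm_neg]) hjoin)
    _ = (d - 1) * M := by rw [← hd₀]; push_cast; ring
  have hdN' : (d : ℝ) ≤ N := Nat.cast_le.2 hdN
  have hM_nonneg : 0 ≤ M := norm_nonneg _
  exact norm_le_zero_iff.1 ((hmax (k, s) ⟨hs, hd⟩).trans (by nlinarith))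

end CutAndJoin

section GaussianMoments

variable {N : ℕ} (ℙ : Measure U(N)) [IsFiniteMeasure ℙ]

lemma sum_map_mul_moment_eq {k : ℕ} {s t : Multiset ℕ}
    (ih : ∀ m, k + 1 + (m + 1) ∈ t → moment ℙ s ((m + 1) ::ₘ t.erase (k + 1 + (m + 1))) =
      (m + 1) * s.count (m + 1) * moment ℙ (s.erase (m + 1)) (t.erase (k + 1 + (m + 1)))) :
    (t.map fun m => m * if m ≤ k + 1 then moment ℙ ((k + 1 - m) ::ₘ s) (t.erase m) else
      moment ℙ s ((m - (k + 1)) ::ₘ t.erase m)).sum =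
    N * ((k + 1) * t.count (k + 1) * moment ℙ s (t.erase (k + 1))) +
      ∑ l ∈ Finset.range k,
        (l + 1) * t.count (l + 1) * moment ℙ ((k - l) ::ₘ s) (t.erase (l + 1)) +
      (s.map fun m => m * ((k + m + 1) * t.count (k + m + 1) *
        moment ℙ (s.erase m) (t.erase (k + m + 1)))).sum := by
  rw [sum_map_eq_sum_range_count_mul (K := k + 1 + (s.sum + t.sum)) (by omega) (by simp),
    sum_map_eq_sum_range_count_mul (s := s) (K := s.sum + t.sum) (by omega) (by simp),
    Finset.sum_range_add, Finset.sum_range_succ]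
  have hlt : ∀ l ∈ Finset.range k, (t.count (l + 1) : ℂ) * (((l + 1 : ℕ) : ℂ) *
      if l + 1 ≤ k + 1 then moment ℙ ((k + 1 - (l + 1)) ::ₘ s) (t.erase (l + 1)) else
        moment ℙ s ((l + 1 - (k + 1)) ::ₘ t.erase (l + 1))) =
      (l + 1) * t.count (l + 1) * moment ℙ ((k - l) ::ₘ s) (t.erase (l + 1)) := fun l hl => by
    have hl := Finset.mem_range.1 hl
    rw [if_pos (by omega), Nat.add_sub_add_right]
    push_cast
    ring
  have hgt (m : ℕ) : (t.count (k + 1 + m + 1) : ℂ) * (((k + 1 + m + 1 : ℕ) : ℂ) *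
      if k + 1 + m + 1 ≤ k + 1 then
        moment ℙ ((k + 1 - (k + 1 + m + 1)) ::ₘ s) (t.erase (k + 1 + m + 1))
      else moment ℙ s ((k + 1 + m + 1 - (k + 1)) ::ₘ t.erase (k + 1 + m + 1))) =
      s.count (m + 1) * (((m + 1 : ℕ) : ℂ) * ((k + (m + 1 : ℕ) + 1) * t.count (k + (m + 1) + 1) *
        moment ℙ (s.erase (m + 1)) (t.erase (k + (m + 1) + 1)))) := by
    rw [if_neg (by omega), show k + 1 + m + 1 - (k + 1) = m + 1 by omega,
      show k + (m + 1) + 1 = k + 1 + (m + 1) by omega, add_assoc (k + 1) m 1]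
    by_cases hm : k + 1 + (m + 1) ∈ t
    · rw [ih m hm]
      push_cast
      ring
    · rw [Multiset.count_eq_zero.2 hm]
      simp
  rw [Finset.sum_congr rfl hlt, Finset.sum_congr rfl fun m _ => hgt m, if_pos le_rfl, Nat.sub_self,
    moment_zero_cons]
  push_cast
  ring

/-- The deviation of `E[p_k * p_s * conj p_t]` from the value which it would have if the `p_m` were
independent centred complex Gaussians with `E|p_m|² = m`. -/
def momentDefect (t : Multiset ℕ) (k : ℕ) (s : Multiset ℕ) : ℂ :=
  moment ℙ (k ::ₘ s) t - k * t.count k * moment ℙ s (t.erase k)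

lemma nsmul_momentDefect [ℙ.IsMulLeftInvariant] {k : ℕ} {s t : Multiset ℕ}
    (ih : ∀ m, k + 1 + (m + 1) ∈ t →
      momentDefect ℙ s (m + 1) (t.erase (k + 1 + (m + 1))) = 0) :
    N • momentDefect ℙ t (k + 1) s =
      -∑ l ∈ Finset.range k, momentDefect ℙ t (l + 1) ((k - l) ::ₘ s) -
        (s.map fun m => m • momentDefect ℙ t (k + m + 1) (s.erase m)).sum := by
  have ih' (m : ℕ) (hm : k + 1 + (m + 1) ∈ t) :
      moment ℙ s ((m + 1) ::ₘ t.erase (k + 1 + (m + 1))) =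
        (m + 1) * s.count (m + 1) * moment ℙ (s.erase (m + 1)) (t.erase (k + 1 + (m + 1))) := by
    rw [← star_moment, sub_eq_zero.1 (ih m hm)]
    simp [star_moment]
  have hloop := moment_loop_equation ℙ (k + 1) s t
  rw [sum_map_mul_moment_eq ℙ ih', Finset.sum_range_succ] at hloop
  simp only [Nat.add_sub_cancel, Nat.sub_self] at hloop
  rw [Multiset.cons_swap, moment_zero_cons] at hloop
  simp only [momentDefect, nsmul_eq_mul, mul_sub, Multiset.sum_map_sub, Finset.sum_sub_distrib,
    Nat.cast_add, Nat.cast_one, add_right_comm _ 1] at hloop ⊢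
  linear_combination hloop

theorem momentDefect_eq_zero [ℙ.IsMulLeftInvariant] {k : ℕ} {s t : Multiset ℕ} (hs : 0 ∉ s)
    (ht : 0 ∉ t) (hks : k + 1 + s.sum ≤ N) (htN : t.sum ≤ N) : momentDefect ℙ t (k + 1) s = 0 := by
  induction h : k + 1 + s.sum + t.sum using Nat.strong_induction_on generalizing k s t with
  | h n IH =>
    refine eq_zero_of_cut_join_recursion hks (fun k' s' hs' hd => ?_) hs rfl
    refine nsmul_momentDefect ℙ fun m hm => ?_
    have := erase_add_sum hm
    exact IH _ (by omega) (fun h => ht (Multiset.mem_of_mem_erase h)) hs' (by omega) (by omega) rfl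

end GaussianMoments

section WeightedPolynomials

/-- The monomial in the formal power sums `X k` whose exponents are the multiplicities of `s`. -/
def multisetMonomial (s : Multiset ℕ) : MvPolynomial ℕ ℂ := (s.map MvPolynomial.X).prod

lemma multisetMonomial_cons (a : ℕ) (s : Multiset ℕ) :
    multisetMonomial (a ::ₘ s) = MvPolynomial.X a * multisetMonomial s := by
  simp [multisetMonomial]

lemma multisetMonomial_add (s t : Multiset ℕ) :
    multisetMonomial (s + t) = multisetMonomial s * multisetMonomial t := by
  simp [multisetMonomial]

lemma pderiv_multisetMonomial (k : ℕ) (s : Multiset ℕ) :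
    MvPolynomial.pderiv k (multisetMonomial s) =
      (s.count k : ℂ) • multisetMonomial (s.erase k) := by
  induction s using Multiset.induction with
  | empty => simp [multisetMonomial]
  | cons a s ih =>
    rw [multisetMonomial_cons, Derivation.leibniz, ih, MvPolynomial.pderiv_X]
    obtain rfl | h := eq_or_ne a k
    · by_cases hs : a ∈ s
      · have hcons : MvPolynomial.X a * multisetMonomial (s.erase a) = multisetMonomial s := by
          rw [← multisetMonomial_cons, Multiset.cons_erase hs]
        simp [hcons, add_smul]
      · simp [hs]
    · simp [Multiset.count_cons_of_ne h.symm, Multiset.erase_cons_tail _ h,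
        multisetMonomial_cons, h]

/-- The polynomials of degree at most `d` in the variables `X 1, X 2, …`, where `X k` has weight
`k`. The variable `X 0`, which stands for the constant `N`, is excluded. -/
def weightLE (d : ℕ) : Submodule ℂ (MvPolynomial ℕ ℂ) :=
  Submodule.span ℂ (multisetMonomial '' {s | 0 ∉ s ∧ s.sum ≤ d})

lemma weightLE_mono {d e : ℕ} (h : d ≤ e) : weightLE d ≤ weightLE e :=
  Submodule.span_mono (Set.image_mono fun _ hs => ⟨hs.1, hs.2.trans h⟩)

lemma mul_mem_weightLE {d e : ℕ} {f g : MvPolynomial ℕ ℂ} (hf : f ∈ weightLE d)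
    (hg : g ∈ weightLE e) : f * g ∈ weightLE (d + e) := by
  suffices weightLE d * weightLE e ≤ weightLE (d + e) from this (Submodule.mul_mem_mul hf hg)
  rw [weightLE, weightLE, Submodule.span_mul_span]
  refine Submodule.span_mono ?_
  rintro _ ⟨_, ⟨s, hs, rfl⟩, _, ⟨t, ht, rfl⟩, rfl⟩
  refine ⟨s + t, ⟨by simp [hs.1, ht.1], ?_⟩, multisetMonomial_add s t⟩
  rw [Multiset.sum_add]
  exact add_le_add hs.2 ht.2

lemma one_mem_weightLE (d : ℕ) : (1 : MvPolynomial ℕ ℂ) ∈ weightLE d :=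
  Submodule.subset_span ⟨0, by simp, by simp [multisetMonomial]⟩

lemma X_mem_weightLE {k d : ℕ} (hk : 1 ≤ k) (h : k ≤ d) :
    (MvPolynomial.X k : MvPolynomial ℕ ℂ) ∈ weightLE d :=
  Submodule.subset_span ⟨{k}, ⟨by simp; omega, by simpa⟩, by simp [multisetMonomial]⟩

end WeightedPolynomials

section LinearForms

variable {F : Finset ℕ}

/-- The linear form `∑ k ∈ F, c k * p_k` in the formal power sums. -/
def linearForm (F : Finset ℕ) (c : ℕ → ℂ) : MvPolynomial ℕ ℂ := ∑ k ∈ F, c k • MvPolynomial.X k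

/-- The derivation which, in weight at most `N`, is adjoint to multiplication by `linearForm F c`:
the power sum `p_k` behaves like a complex Gaussian with `E|p_k|² = k`, so that multiplication by it
is adjoint to `k ∂_k`. -/
def annihilation (F : Finset ℕ) (c : ℕ → ℂ) :
    Derivation ℂ (MvPolynomial ℕ ℂ) (MvPolynomial ℕ ℂ) :=
  ∑ k ∈ F, (star (c k) * k) • MvPolynomial.pderiv k

/-- The covariance `E[Y * conj Y']` of the linear forms `Y`, `Y'` with coefficients `c`, `c'`. -/
def linearFormCov (F : Finset ℕ) (c c' : ℕ → ℂ) : ℂ := ∑ k ∈ F, k * c k * star (c' k)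

lemma linearForm_mem_weightLE (c : ℕ → ℂ) {m : ℕ} (hF : F ⊆ Finset.Icc 1 m) :
    linearForm F c ∈ weightLE m :=
  Submodule.sum_mem _ fun _ hk => Submodule.smul_mem _ _ <|
    X_mem_weightLE (Finset.mem_Icc.1 (hF hk)).1 (Finset.mem_Icc.1 (hF hk)).2

lemma annihilation_apply (F : Finset ℕ) (c : ℕ → ℂ) (g : MvPolynomial ℕ ℂ) :
    annihilation F c g = ∑ k ∈ F, (star (c k) * k) • MvPolynomial.pderiv k g := by
  rw [annihilation, ← Derivation.coeFnAddMonoidHom_apply, map_sum, Finset.sum_apply]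
  rfl

lemma annihilation_eq_zero {g : MvPolynomial ℕ ℂ} (hg : ∀ k ∈ F, MvPolynomial.pderiv k g = 0)
    (c : ℕ → ℂ) : annihilation F c g = 0 := by
  rw [annihilation_apply]
  exact Finset.sum_eq_zero fun k hk => by rw [hg k hk, smul_zero]

lemma pderiv_linearForm (k : ℕ) (F : Finset ℕ) (c : ℕ → ℂ) :
    MvPolynomial.pderiv k (linearForm F c) = (if k ∈ F then c k else 0) • 1 := by
  simp only [linearForm, map_sum, Derivation.map_smul, MvPolynomial.pderiv_X, Pi.single_apply,
    smul_ite, smul_zero, ite_smul, zero_smul]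
  exact Finset.sum_ite_eq' F k _

lemma annihilation_linearForm (F : Finset ℕ) (c c' : ℕ → ℂ) :
    annihilation F c (linearForm F c') = linearFormCov F c' c • 1 := by
  rw [annihilation_apply, linearFormCov, Finset.sum_smul]
  refine Finset.sum_congr rfl fun k hk => ?_
  rw [pderiv_linearForm, if_pos hk, smul_smul]
  ring_nf

lemma annihilation_linearForm_mul {g : MvPolynomial ℕ ℂ} (F : Finset ℕ) (c c' : ℕ → ℂ) :
    annihilation F c (linearForm F c' * g) =
      linearForm F c' * annihilation F c g + linearFormCov F c' c • g := by
  rw [Derivation.leibniz, annihilation_linearForm, smul_eq_mul, smul_eq_mul, mul_smul_comm, mul_one]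

lemma star_linearFormCov (F : Finset ℕ) (c c' : ℕ → ℂ) :
    star (linearFormCov F c c') = linearFormCov F c' c := by
  simp only [linearFormCov, star_sum, star_mul', star_natCast, star_star]
  exact Finset.sum_congr rfl fun k _ => by ring

end LinearForms

section HaarForm

variable {N : ℕ}

/-- The homomorphism substituting the power sums `powerSum N k` for the variables `X k`. -/
def evalPowerSum (N : ℕ) : MvPolynomial ℕ ℂ →ₐ[ℂ] C(U(N), ℂ) := MvPolynomial.aeval (powerSum N)

lemma evalPowerSum_X (k : ℕ) : evalPowerSum N (MvPolynomial.X k) = powerSum N k := by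
  simp [evalPowerSum]

lemma evalPowerSum_multisetMonomial (s : Multiset ℕ) :
    evalPowerSum N (multisetMonomial s) = powerSumProd N s := by
  rw [multisetMonomial, powerSumProd, map_multiset_prod, Multiset.map_map]
  simp only [Function.comp_def, evalPowerSum_X]

variable (ℙ : Measure U(N)) [IsFiniteMeasure ℙ]

/-- The sesquilinear form `(f, g) ↦ E[f * conj g]` on polynomials in the power sums. -/
def haarForm : MvPolynomial ℕ ℂ →ₗ[ℂ] MvPolynomial ℕ ℂ →ₛₗ[starRingEnd ℂ] ℂ :=
  LinearMap.mk₂'ₛₗ (RingHom.id ℂ) (starRingEnd ℂ)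
    (fun f g => expectation ℙ (evalPowerSum N f * star (evalPowerSum N g)))
    (fun _ _ _ => by simp only [map_add, add_mul])
    (fun _ _ _ => by simp only [map_smul, smul_mul_assoc, RingHom.id_apply])
    (fun _ _ _ => by simp only [map_add, star_add, mul_add])
    (fun _ _ _ => by simp only [map_smul, star_smul, mul_smul_comm, starRingEnd_apply])

lemma haarForm_apply (f g : MvPolynomial ℕ ℂ) :
    haarForm ℙ f g = expectation ℙ (evalPowerSum N f * star (evalPowerSum N g)) := rfl

lemma star_haarForm (f g : MvPolynomial ℕ ℂ) : star (haarForm ℙ f g) = haarForm ℙ g f := by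
  rw [haarForm_apply, haarForm_apply, ← expectation_star, star_mul', star_star, mul_comm]

lemma haarForm_multisetMonomial (s t : Multiset ℕ) :
    haarForm ℙ (multisetMonomial s) (multisetMonomial t) = moment ℙ s t := by
  rw [haarForm_apply, evalPowerSum_multisetMonomial, evalPowerSum_multisetMonomial, moment]

variable [ℙ.IsMulLeftInvariant]

theorem haarForm_X_mul {k d : ℕ} (hk : 1 ≤ k) (hd : k + d ≤ N) {f g : MvPolynomial ℕ ℂ}
    (hf : f ∈ weightLE d) (hg : g ∈ weightLE N) :
    haarForm ℙ (MvPolynomial.X k * f) g = k * haarForm ℙ f (MvPolynomial.pderiv k g) := by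
  obtain ⟨k, rfl⟩ := Nat.exists_eq_add_of_le' hk
  rw [weightLE] at hf hg
  induction hf using Submodule.span_induction with
  | zero => simp
  | add f f' _ _ h h' => rw [mul_add, map_add, LinearMap.add_apply, h, h', map_add,
      LinearMap.add_apply, mul_add]
  | smul c f _ h => rw [mul_smul_comm, map_smul, LinearMap.smul_apply, h, map_smul,
      LinearMap.smul_apply, smul_eq_mul, smul_eq_mul, mul_left_comm]
  | mem f hf =>
  induction hg using Submodule.span_induction with
  | zero => simp
  | add g g' _ _ h h' => rw [map_add, h, h', map_add, map_add, mul_add]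
  | smul c g _ h => rw [Derivation.map_smul, map_smulₛₗ, h, map_smulₛₗ, smul_eq_mul, smul_eq_mul,
      mul_left_comm]
  | mem g hg =>
  obtain ⟨s, ⟨hs, hsd⟩, rfl⟩ := hf
  obtain ⟨t, ⟨ht, htN⟩, rfl⟩ := hg
  have hmoment := sub_eq_zero.1 (momentDefect_eq_zero ℙ hs ht (k := k) (by omega) htN)
  rw [pderiv_multisetMonomial, map_smulₛₗ, ← multisetMonomial_cons, haarForm_multisetMonomial,
    haarForm_multisetMonomial, hmoment, map_natCast, smul_eq_mul, mul_assoc]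

theorem haarForm_linearForm_mul {F : Finset ℕ} (c : ℕ → ℂ) {m d : ℕ} (hF : F ⊆ Finset.Icc 1 m)
    (hd : m + d ≤ N) {f g : MvPolynomial ℕ ℂ} (hf : f ∈ weightLE d) (hg : g ∈ weightLE N) :
    haarForm ℙ (linearForm F c * f) g = haarForm ℙ f (annihilation F c g) := by
  rw [linearForm, Finset.sum_mul, map_sum, LinearMap.sum_apply, annihilation_apply, map_sum]
  refine Finset.sum_congr rfl fun k hk => ?_
  obtain ⟨hk1, hkm⟩ := Finset.mem_Icc.1 (hF hk)
  rw [smul_mul_assoc, map_smul, LinearMap.smul_apply, haarForm_X_mul ℙ hk1 (by omega) hf hg,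
    map_smulₛₗ]
  simp [mul_assoc]

end HaarForm

section WickCalculus

/-- `g` does not involve the power sums indexed by `F ⊆ {1, …, m}`, and its weight is so small that
products of `g` with two of these power sums still have weight at most `N`. -/
structure IsFreeOf (N : ℕ) (F : Finset ℕ) (m e : ℕ) (g : MvPolynomial ℕ ℂ) : Prop where
  subset_Icc : F ⊆ Finset.Icc 1 m
  weight_le : 2 * m + e ≤ N
  mem_weightLE : g ∈ weightLE e
  pderiv_eq_zero : ∀ k ∈ F, MvPolynomial.pderiv k g = 0

namespace IsFreeOf

variable {N : ℕ} {F : Finset ℕ} {m e : ℕ} {g : MvPolynomial ℕ ℂ}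

lemma linearForm_mul_mem (h : IsFreeOf N F m e g) (c : ℕ → ℂ) :
    linearForm F c * g ∈ weightLE (m + e) :=
  mul_mem_weightLE (linearForm_mem_weightLE c h.subset_Icc) h.mem_weightLE

lemma annihilation_linearForm_mul (h : IsFreeOf N F m e g) (a b : ℕ → ℂ) :
    annihilation F a (linearForm F b * g) = linearFormCov F b a • g := by
  rw [_root_.annihilation_linearForm_mul, annihilation_eq_zero h.pderiv_eq_zero, mul_zero, zero_add]

variable (ℙ : Measure U(N)) [IsFiniteMeasure ℙ] [ℙ.IsMulLeftInvariant]

-- In `wickᵢⱼ` the two arguments are products of `g` with `i`, respectively `j`, linear forms.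
lemma wick₁₀ (h : IsFreeOf N F m e g) (a : ℕ → ℂ) :
    haarForm ℙ (linearForm F a * g) g = 0 := by
  have := h.weight_le
  rw [haarForm_linearForm_mul ℙ a h.subset_Icc (d := e) (by omega) h.mem_weightLE
    (weightLE_mono (by omega) h.mem_weightLE), annihilation_eq_zero h.pderiv_eq_zero, map_zero]

lemma wick₁₁ (h : IsFreeOf N F m e g) (a b : ℕ → ℂ) :
    haarForm ℙ (linearForm F a * g) (linearForm F b * g) =
      linearFormCov F a b * haarForm ℙ g g := by
  have := h.weight_le
  rw [haarForm_linearForm_mul ℙ a h.subset_Icc (d := e) (by omega) h.mem_weightLE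
    (weightLE_mono (by omega) (h.linearForm_mul_mem b)), h.annihilation_linearForm_mul,
    map_smulₛₗ, starRingEnd_apply, star_linearFormCov, smul_eq_mul]

lemma wick₂ (h : IsFreeOf N F m e g) (a b : ℕ → ℂ) {f : MvPolynomial ℕ ℂ}
    (hf : f ∈ weightLE N) :
    haarForm ℙ (linearForm F a * (linearForm F b * g)) f =
      haarForm ℙ (linearForm F b * g) (annihilation F a f) := by
  have := h.weight_le
  exact haarForm_linearForm_mul ℙ a h.subset_Icc (by omega) (h.linearForm_mul_mem b) hf

lemma wick₂₀ (h : IsFreeOf N F m e g) (a b : ℕ → ℂ) :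
    haarForm ℙ (linearForm F a * (linearForm F b * g)) g = 0 := by
  have := h.weight_le
  rw [h.wick₂ ℙ a b (weightLE_mono (by omega) h.mem_weightLE),
    annihilation_eq_zero h.pderiv_eq_zero, map_zero]

lemma wick₂₁ (h : IsFreeOf N F m e g) (a b c : ℕ → ℂ) :
    haarForm ℙ (linearForm F a * (linearForm F b * g)) (linearForm F c * g) = 0 := by
  have := h.weight_le
  rw [h.wick₂ ℙ a b (weightLE_mono (by omega) (h.linearForm_mul_mem c)),
    h.annihilation_linearForm_mul, map_smulₛₗ, h.wick₁₀ ℙ, smul_zero]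

lemma wick₂₂ (h : IsFreeOf N F m e g) (a b c d : ℕ → ℂ) :
    haarForm ℙ (linearForm F a * (linearForm F b * g)) (linearForm F c * (linearForm F d * g)) =
      (linearFormCov F a c * linearFormCov F b d + linearFormCov F a d * linearFormCov F b c) *
        haarForm ℙ g g := by
  have := h.weight_le
  rw [h.wick₂ ℙ a b (weightLE_mono (by omega) <|
      mul_mem_weightLE (linearForm_mem_weightLE c h.subset_Icc) (h.linearForm_mul_mem d)),
    _root_.annihilation_linearForm_mul, h.annihilation_linearForm_mul, mul_smul_comm, map_add,
    map_smulₛₗ, map_smulₛₗ, h.wick₁₁ ℙ, h.wick₁₁ ℙ, starRingEnd_apply, starRingEnd_apply,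
    star_linearFormCov, star_linearFormCov, smul_eq_mul, smul_eq_mul]
  ring

lemma wick₀₁ (h : IsFreeOf N F m e g) (a : ℕ → ℂ) :
    haarForm ℙ g (linearForm F a * g) = 0 := by
  rw [← star_haarForm, h.wick₁₀ ℙ, star_zero]

lemma wick₀₂ (h : IsFreeOf N F m e g) (a b : ℕ → ℂ) :
    haarForm ℙ g (linearForm F a * (linearForm F b * g)) = 0 := by
  rw [← star_haarForm, h.wick₂₀ ℙ, star_zero]

lemma wick₁₂ (h : IsFreeOf N F m e g) (a b c : ℕ → ℂ) :
    haarForm ℙ (linearForm F c * g) (linearForm F a * (linearForm F b * g)) = 0 := by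
  rw [← star_haarForm, h.wick₂₁ ℙ, star_zero]

lemma haarForm_tilt_self (h : IsFreeOf N F m e g) (β : ℂ) (c : ℕ → ℂ) :
    haarForm ℙ ((1 + β • linearForm F c) * g) ((1 + β • linearForm F c) * g) =
      (1 + β * star β * linearFormCov F c c) * haarForm ℙ g g := by
  simp only [add_mul, one_mul, smul_mul_assoc, map_add, map_smul, map_smulₛₗ, LinearMap.add_apply,
    LinearMap.smul_apply, h.wick₁₀ ℙ, h.wick₀₁ ℙ, h.wick₁₁ ℙ, starRingEnd_apply,
    smul_eq_mul]
  ring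

lemma haarForm_tilt_tilt_self (h : IsFreeOf N F m e g) (β : ℂ) (c c' : ℕ → ℂ) :
    haarForm ℙ ((1 + β • linearForm F c) * ((1 + β • linearForm F c') * g))
        ((1 + β • linearForm F c) * ((1 + β • linearForm F c') * g)) =
      (1 + β * star β * (linearFormCov F c c + linearFormCov F c' c' +
          (linearFormCov F c c' + linearFormCov F c' c)) +
        (β * star β) ^ 2 * (linearFormCov F c c * linearFormCov F c' c' +
          linearFormCov F c c' * linearFormCov F c' c)) * haarForm ℙ g g := by
  simp only [add_mul, mul_add, one_mul, smul_mul_assoc, mul_smul_comm, map_add, map_smul,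
    map_smulₛₗ, LinearMap.add_apply, LinearMap.smul_apply, h.wick₁₀ ℙ, h.wick₀₁ ℙ, h.wick₁₁ ℙ,
    h.wick₂₀ ℙ, h.wick₀₂ ℙ, h.wick₂₁ ℙ, h.wick₁₂ ℙ, h.wick₂₂ ℙ, starRingEnd_apply, smul_eq_mul]
  ring

lemma haarForm_linearForm_tilt_tilt (h : IsFreeOf N F m e g) (β : ℂ) (c : ℕ → ℂ) :
    haarForm ℙ (linearForm F c * ((1 + β • linearForm F c) * g)) ((1 + β • linearForm F c) * g) =
      star β * linearFormCov F c c * haarForm ℙ g g := by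
  simp only [add_mul, mul_add, one_mul, smul_mul_assoc, mul_smul_comm, map_add, map_smul,
    map_smulₛₗ, LinearMap.add_apply, LinearMap.smul_apply, h.wick₁₀ ℙ, h.wick₁₁ ℙ, h.wick₂₀ ℙ,
    h.wick₂₁ ℙ, starRingEnd_apply, smul_eq_mul]
  ring

lemma haarForm_linearForm_tilt_self (h : IsFreeOf N F m e g) (β : ℂ) (c : ℕ → ℂ) :
    haarForm ℙ (linearForm F c * ((1 + β • linearForm F c) * g))
        (linearForm F c * ((1 + β • linearForm F c) * g)) =
      (linearFormCov F c c + 2 * (β * star β) * linearFormCov F c c ^ 2) * haarForm ℙ g g := by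
  simp only [add_mul, mul_add, one_mul, smul_mul_assoc, mul_smul_comm, map_add, map_smul,
    map_smulₛₗ, LinearMap.add_apply, LinearMap.smul_apply, h.wick₁₁ ℙ, h.wick₂₁ ℙ, h.wick₁₂ ℙ,
    h.wick₂₂ ℙ, starRingEnd_apply, smul_eq_mul]
  ring

end IsFreeOf

end WickCalculus

section RieszProduct

variable {ι : Type*} {F : ι → Finset ℕ} {m : ι → ℕ} {S : Finset ι} {i : ι}

/-- The variance `E|Y|²` of the linear form `Y` with coefficients `c`. -/
def linearFormVar (F : Finset ℕ) (c : ℕ → ℂ) : ℝ := ∑ k ∈ F, k * ‖c k‖ ^ 2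

lemma linearFormVar_nonneg (F : Finset ℕ) (c : ℕ → ℂ) : 0 ≤ linearFormVar F c :=
  Finset.sum_nonneg fun _ _ => by positivity

lemma linearFormCov_self (F : Finset ℕ) (c : ℕ → ℂ) :
    linearFormCov F c c = linearFormVar F c := by
  simp only [linearFormCov, linearFormVar, mul_assoc, ← starRingEnd_apply, Complex.mul_conj']
  push_cast
  rfl

/-- The product `∏ i ∈ S, (1 + β * Y i)`, where `Y i` is the linear form with coefficients `c` on
the block `F i`. For disjoint blocks, `|∏ i ∈ S, (1 + β * Y i)|²` is an unnormalised probability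
density under which all the `Y i` have mean proportional to `conj β`. -/
def rieszProd (F : ι → Finset ℕ) (β : ℂ) (c : ℕ → ℂ) (S : Finset ι) : MvPolynomial ℕ ℂ :=
  ∏ i ∈ S, (1 + β • linearForm (F i) c)

lemma rieszProd_insert [DecidableEq ι] (β : ℂ) (c : ℕ → ℂ) (hi : i ∉ S) :
    rieszProd F β c (insert i S) = (1 + β • linearForm (F i) c) * rieszProd F β c S :=
  Finset.prod_insert hi

lemma rieszProd_mem_weightLE (hF : ∀ i, F i ⊆ Finset.Icc 1 (m i)) (β : ℂ) (c : ℕ → ℂ)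
    (S : Finset ι) : rieszProd F β c S ∈ weightLE (∑ i ∈ S, m i) := by
  classical
  induction S using Finset.induction_on with
  | empty => simpa [rieszProd] using one_mem_weightLE _
  | insert i S hi ih =>
    rw [rieszProd_insert β c hi, Finset.sum_insert hi]
    exact mul_mem_weightLE (add_mem (one_mem_weightLE _) <|
      Submodule.smul_mem _ _ (linearForm_mem_weightLE c (hF i))) ih

lemma pderiv_rieszProd (hF : Pairwise (Function.onFun Disjoint F)) (β : ℂ) (c : ℕ → ℂ)
    (hi : i ∉ S) {k : ℕ} (hk : k ∈ F i) : MvPolynomial.pderiv k (rieszProd F β c S) = 0 := by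
  classical
  induction S using Finset.induction_on with
  | empty => simp [rieszProd]
  | insert j S hj ih =>
    rw [Finset.mem_insert, not_or] at hi
    have hkj : k ∉ F j := Finset.disjoint_left.1 (hF hi.1) hk
    rw [rieszProd_insert β c hj, Derivation.leibniz, ih hi.2, map_add, Derivation.map_smul,
      pderiv_linearForm, if_neg hkj]
    simp

variable {N : ℕ}

lemma isFreeOf_rieszProd [DecidableEq ι] (hF : ∀ i, F i ⊆ Finset.Icc 1 (m i))
    (hdisj : Pairwise (Function.onFun Disjoint F)) (β : ℂ) (c : ℕ → ℂ) (hi : i ∉ S)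
    (hN : 2 * ∑ j ∈ insert i S, m j ≤ N) :
    IsFreeOf N (F i) (m i) (∑ j ∈ S, m j) (rieszProd F β c S) where
  subset_Icc := hF i
  weight_le := by rw [Finset.sum_insert hi] at hN; omega
  mem_weightLE := rieszProd_mem_weightLE hF β c S
  pderiv_eq_zero _ hk := pderiv_rieszProd hdisj β c hi hk

lemma isFreeOf_rieszProd_mul [DecidableEq ι] (hF : ∀ i, F i ⊆ Finset.Icc 1 (m i))
    (hdisj : Pairwise (Function.onFun Disjoint F)) (β : ℂ) (c c' : ℕ → ℂ) (hi : i ∉ S)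
    (hN : 2 * ∑ j ∈ insert i S, m j ≤ N) :
    IsFreeOf N (F i) (m i) (∑ j ∈ S, m j + ∑ j ∈ S, m j)
      (rieszProd F β c S * rieszProd F β c' S) where
  subset_Icc := hF i
  weight_le := by rw [Finset.sum_insert hi] at hN; omega
  mem_weightLE := mul_mem_weightLE (rieszProd_mem_weightLE hF β c S)
    (rieszProd_mem_weightLE hF β c' S)
  pderiv_eq_zero k hk := by
    rw [Derivation.leibniz, pderiv_rieszProd hdisj β c hi hk, pderiv_rieszProd hdisj β c' hi hk,
      smul_zero, smul_zero, add_zero]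

/-- The squared norm `E|f|²` of a polynomial `f` in the power sums. -/
def sqNorm (ℙ : Measure U(N)) (f : MvPolynomial ℕ ℂ) : ℝ := ∫ V, ‖evalPowerSum N f V‖ ^ 2 ∂ℙ

lemma sqNorm_nonneg (ℙ : Measure U(N)) (f : MvPolynomial ℕ ℂ) : 0 ≤ sqNorm ℙ f :=
  integral_nonneg fun _ => by positivity

lemma haarForm_self (ℙ : Measure U(N)) [IsFiniteMeasure ℙ] (f : MvPolynomial ℕ ℂ) :
    haarForm ℙ f f = sqNorm ℙ f := by
  rw [haarForm_apply, sqNorm, ← integral_complex_ofReal]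
  refine integral_congr_ae (ae_of_all _ fun V => ?_)
  simpa using Complex.mul_conj' (evalPowerSum N f V)

variable (ℙ : Measure U(N)) [IsProbabilityMeasure ℙ]

lemma sqNorm_one : sqNorm ℙ 1 = 1 := by simp [sqNorm]

variable [ℙ.IsMulLeftInvariant]

lemma sqNorm_rieszProd (hF : ∀ i, F i ⊆ Finset.Icc 1 (m i))
    (hdisj : Pairwise (Function.onFun Disjoint F)) (β : ℂ) (c : ℕ → ℂ)
    (hN : 2 * ∑ i ∈ S, m i ≤ N) :
    sqNorm ℙ (rieszProd F β c S) = ∏ i ∈ S, (1 + ‖β‖ ^ 2 * linearFormVar (F i) c) := by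
  classical
  induction S using Finset.induction_on with
  | empty => simpa [rieszProd] using sqNorm_one ℙ
  | insert i S hi ih =>
    have key := (isFreeOf_rieszProd hF hdisj β c hi hN).haarForm_tilt_self ℙ β c
    rw [Finset.sum_insert hi] at hN
    rw [← rieszProd_insert β c hi, haarForm_self, haarForm_self, ih (by omega),
      linearFormCov_self, ← starRingEnd_apply, Complex.mul_conj'] at key
    rw [Finset.prod_insert hi]
    exact_mod_cast key

lemma sqNorm_tilt_tilt_le {F : Finset ℕ} {m e : ℕ} {g : MvPolynomial ℕ ℂ}
    (h : IsFreeOf N F m e g) (β : ℂ) (c c' : ℕ → ℂ) :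
    sqNorm ℙ ((1 + β • linearForm F c) * ((1 + β • linearForm F c') * g)) ≤
      (1 + ‖β‖ ^ 2 * linearFormVar F c) * (1 + ‖β‖ ^ 2 * linearFormVar F c') *
        (1 + ‖β‖ ^ 2 * ‖linearFormCov F c c'‖) ^ 2 * sqNorm ℙ g := by
  have key := h.haarForm_tilt_tilt_self ℙ β c c'
  set v := linearFormVar F c
  set v' := linearFormVar F c'
  set K := linearFormCov F c c' with hK
  have sq_K : K * linearFormCov F c' c = ((‖K‖ ^ 2 : ℝ) : ℂ) := by
    rw [← star_linearFormCov, ← starRingEnd_apply, Complex.mul_conj', Complex.ofReal_pow]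
  have re_K : K + linearFormCov F c' c = ((2 * K.re : ℝ) : ℂ) := by
    rw [← star_linearFormCov, ← starRingEnd_apply, Complex.add_conj]
  rw [haarForm_self, haarForm_self, linearFormCov_self, linearFormCov_self, sq_K, re_K,
    ← starRingEnd_apply, Complex.mul_conj'] at key
  have sqNorm_eq : sqNorm ℙ ((1 + β • linearForm F c) * ((1 + β • linearForm F c') * g)) =
      (1 + ‖β‖ ^ 2 * (v + v' + 2 * K.re) + (‖β‖ ^ 2) ^ 2 * (v * v' + ‖K‖ ^ 2)) * sqNorm ℙ g := by
    exact_mod_cast key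
  rw [sqNorm_eq]
  refine mul_le_mul_of_nonneg_right ?_ (sqNorm_nonneg ℙ g)
  have hv : 0 ≤ ‖β‖ ^ 2 * v := mul_nonneg (sq_nonneg _) (linearFormVar_nonneg F c)
  have hv' : 0 ≤ ‖β‖ ^ 2 * v' := mul_nonneg (sq_nonneg _) (linearFormVar_nonneg F c')
  have one_le : 1 ≤ (1 + ‖β‖ ^ 2 * v) * (1 + ‖β‖ ^ 2 * v') := by nlinarith
  have re_le : ‖β‖ ^ 2 * K.re ≤ ‖β‖ ^ 2 * ‖K‖ := by gcongr; exact Complex.re_le_norm K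
  have hn : 0 ≤ 2 * (‖β‖ ^ 2 * ‖K‖) + (‖β‖ ^ 2 * ‖K‖) ^ 2 := by positivity
  linarith [mul_le_mul_of_nonneg_right one_le hn]

lemma sqNorm_rieszProd_mul_le (hF : ∀ i, F i ⊆ Finset.Icc 1 (m i))
    (hdisj : Pairwise (Function.onFun Disjoint F)) (β : ℂ) (c c' : ℕ → ℂ)
    (hN : 2 * ∑ i ∈ S, m i ≤ N) :
    sqNorm ℙ (rieszProd F β c S * rieszProd F β c' S) ≤
      ∏ i ∈ S, ((1 + ‖β‖ ^ 2 * linearFormVar (F i) c) * (1 + ‖β‖ ^ 2 * linearFormVar (F i) c') *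
        (1 + ‖β‖ ^ 2 * ‖linearFormCov (F i) c c'‖) ^ 2) := by
  classical
  induction S using Finset.induction_on with
  | empty => simpa [rieszProd] using (sqNorm_one ℙ).le
  | insert i S hi ih =>
    have step := sqNorm_tilt_tilt_le ℙ (isFreeOf_rieszProd_mul hF hdisj β c c' hi hN) β c c'
    rw [Finset.sum_insert hi] at hN
    rw [rieszProd_insert β c hi, rieszProd_insert β c' hi, mul_mul_mul_comm, mul_assoc,
      Finset.prod_insert hi]
    have hv := linearFormVar_nonneg (F i) c
    have hv' := linearFormVar_nonneg (F i) c'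
    exact step.trans (by gcongr; exact ih (by omega))

lemma haarForm_linearForm_mul_rieszProd [DecidableEq ι] (hF : ∀ i, F i ⊆ Finset.Icc 1 (m i))
    (hdisj : Pairwise (Function.onFun Disjoint F)) (β : ℂ) (c : ℕ → ℂ)
    (hN : 2 * ∑ i ∈ S, m i ≤ N) (hi : i ∈ S) :
    haarForm ℙ (linearForm (F i) c * rieszProd F β c S) (rieszProd F β c S) =
      star β * linearFormVar (F i) c * sqNorm ℙ (rieszProd F β c (S.erase i)) := by
  rw [← Finset.insert_erase hi] at hN
  have hi' := Finset.notMem_erase i S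
  have key := (isFreeOf_rieszProd hF hdisj β c hi' hN).haarForm_linearForm_tilt_tilt ℙ β c
  rwa [← rieszProd_insert β c hi', Finset.insert_erase hi, haarForm_self,
    linearFormCov_self] at key

lemma sqNorm_linearForm_mul_rieszProd [DecidableEq ι] (hF : ∀ i, F i ⊆ Finset.Icc 1 (m i))
    (hdisj : Pairwise (Function.onFun Disjoint F)) (β : ℂ) (c : ℕ → ℂ)
    (hN : 2 * ∑ i ∈ S, m i ≤ N) (hi : i ∈ S) :
    sqNorm ℙ (linearForm (F i) c * rieszProd F β c S) =
      (linearFormVar (F i) c + 2 * ‖β‖ ^ 2 * linearFormVar (F i) c ^ 2) *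
        sqNorm ℙ (rieszProd F β c (S.erase i)) := by
  rw [← Finset.insert_erase hi] at hN
  have hi' := Finset.notMem_erase i S
  have key := (isFreeOf_rieszProd hF hdisj β c hi' hN).haarForm_linearForm_tilt_self ℙ β c
  rw [← rieszProd_insert β c hi', Finset.insert_erase hi, haarForm_self, haarForm_self,
    linearFormCov_self, ← starRingEnd_apply, Complex.mul_conj'] at key
  exact_mod_cast key

lemma sqNorm_rieszProd_erase [DecidableEq ι] (hF : ∀ i, F i ⊆ Finset.Icc 1 (m i))
    (hdisj : Pairwise (Function.onFun Disjoint F)) (β : ℂ) (c : ℕ → ℂ)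
    (hN : 2 * ∑ i ∈ S, m i ≤ N) (hi : i ∈ S) :
    sqNorm ℙ (rieszProd F β c S) =
      (1 + ‖β‖ ^ 2 * linearFormVar (F i) c) * sqNorm ℙ (rieszProd F β c (S.erase i)) := by
  have hN' : 2 * ∑ j ∈ S.erase i, m j ≤ N :=
    (Nat.mul_le_mul_left 2 (Finset.sum_le_sum_of_subset (Finset.erase_subset i S))).trans hN
  rw [sqNorm_rieszProd ℙ hF hdisj β c hN, sqNorm_rieszProd ℙ hF hdisj β c hN',
    Finset.mul_prod_erase S (fun j => 1 + ‖β‖ ^ 2 * linearFormVar (F j) c) hi]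

end RieszProduct

section RootsOfUnity

variable {n : ℕ} {ζ : ℂ}

lemma sum_pow_mul_star_pow (hζ : IsPrimitiveRoot ζ n) {k k' : ℕ} (hk : k < n) (hk' : k' < n) :
    ∑ l ∈ Finset.range n, (ζ ^ l) ^ k * star ((ζ ^ l) ^ k') = if k = k' then (n : ℂ) else 0 := by
  have hn : ‖ζ‖ = 1 := hζ.norm'_eq_one (by omega)
  have summand_eq (l : ℕ) :
      (ζ ^ l) ^ k * star ((ζ ^ l) ^ k') = (ζ ^ k * star (ζ ^ k')) ^ l := by
    rw [mul_pow, ← star_pow, pow_right_comm, pow_right_comm ζ l k']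
  have mul_star (j : ℕ) : ζ ^ j * star (ζ ^ j) = 1 := by
    rw [← starRingEnd_apply, Complex.mul_conj', norm_pow, hn]; simp
  simp only [summand_eq]
  split_ifs with h
  · subst h
    simp only [mul_star, one_pow, Finset.sum_const, Finset.card_range, nsmul_eq_mul, mul_one]
  · have ratio_ne_one : ζ ^ k * star (ζ ^ k') ≠ 1 := fun h1 => h <| hζ.pow_inj hk hk' <| by
      rw [← mul_one (ζ ^ k), ← mul_star k', mul_left_comm, h1, mul_one]
    rw [geom_sum_eq ratio_ne_one, mul_pow, ← star_pow, pow_right_comm, pow_right_comm ζ k',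
      hζ.pow_eq_one]
    simp

lemma sum_norm_sum_mul_pow_sq (hζ : IsPrimitiveRoot ζ n) {F : Finset ℕ} (hF : ∀ k ∈ F, k < n)
    (a : ℕ → ℂ) :
    ∑ l ∈ Finset.range n, ‖∑ k ∈ F, a k * (ζ ^ l) ^ k‖ ^ 2 = n * ∑ k ∈ F, ‖a k‖ ^ 2 := by
  have expand : ∑ l ∈ Finset.range n,
      (∑ k ∈ F, a k * (ζ ^ l) ^ k) * star (∑ k ∈ F, a k * (ζ ^ l) ^ k) =
        n * ∑ k ∈ F, a k * star (a k) := by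
    calc ∑ l ∈ Finset.range n, (∑ k ∈ F, a k * (ζ ^ l) ^ k) * star (∑ k ∈ F, a k * (ζ ^ l) ^ k)
        = ∑ k ∈ F, ∑ k' ∈ F, a k * star (a k') *
            ∑ l ∈ Finset.range n, (ζ ^ l) ^ k * star ((ζ ^ l) ^ k') := by
          simp only [star_sum, Finset.sum_mul_sum]
          simp only [star_mul', Finset.mul_sum]
          rw [Finset.sum_comm]
          refine Finset.sum_congr rfl fun k _ => ?_
          rw [Finset.sum_comm]
          exact Finset.sum_congr rfl fun k' _ => Finset.sum_congr rfl fun l _ => by ring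
      _ = ∑ k ∈ F, ∑ k' ∈ F, if k = k' then n * (a k * star (a k')) else 0 := by
          refine Finset.sum_congr rfl fun k hk => Finset.sum_congr rfl fun k' hk' => ?_
          rw [sum_pow_mul_star_pow hζ (hF k hk) (hF k' hk'), mul_ite, mul_zero, mul_comm]
      _ = n * ∑ k ∈ F, a k * star (a k) := by
          rw [Finset.mul_sum]
          exact Finset.sum_congr rfl fun k hk => by rw [Finset.sum_ite_eq, if_pos hk]
  simp only [← starRingEnd_apply, Complex.mul_conj'] at expand
  exact_mod_cast expand

end RootsOfUnity

section DyadicBlocks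

/-- The frequencies `2 ^ b ≤ k < 2 ^ (b + 1)`. -/
def dyadicBlock (b : ℕ) : Finset ℕ := Finset.Ico (2 ^ b) (2 ^ (b + 1))

lemma card_dyadicBlock (b : ℕ) : (dyadicBlock b).card = 2 ^ b := by
  rw [dyadicBlock, Nat.card_Ico, pow_succ]; omega

lemma dyadicBlock_subset_Icc (b : ℕ) : dyadicBlock b ⊆ Finset.Icc 1 (2 ^ (b + 1)) := fun k hk => by
  rw [dyadicBlock, Finset.mem_Ico] at hk
  exact Finset.mem_Icc.2 ⟨Nat.one_le_two_pow.trans hk.1, hk.2.le⟩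

lemma lt_two_pow_of_mem_dyadicBlock {b B k : ℕ} (hb : b < B) (hk : k ∈ dyadicBlock b) :
    k < 2 ^ B :=
  (Finset.mem_Ico.1 hk).2.trans_le (Nat.pow_le_pow_right two_pos hb)

lemma pairwise_disjoint_dyadicBlock : Pairwise (Function.onFun Disjoint dyadicBlock) :=
  (pairwise_disjoint_on _).2 fun _ _ hab => Finset.disjoint_left.2 fun _ hka hkb =>
    (lt_two_pow_of_mem_dyadicBlock hab hka).not_ge (Finset.mem_Ico.1 hkb).1

lemma sum_sum_dyadicBlock {M : Type*} [AddCommMonoid M] (f : ℕ → M) (B : ℕ) :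
    ∑ b ∈ Finset.range B, ∑ k ∈ dyadicBlock b, f k = ∑ k ∈ Finset.Ico 1 (2 ^ B), f k := by
  induction B with
  | zero => simp
  | succ B ih =>
    rw [Finset.sum_range_succ, ih, dyadicBlock, Finset.sum_Ico_consecutive _ Nat.one_le_two_pow
      (Nat.pow_le_pow_right two_pos B.le_succ)]

lemma two_mul_sum_two_pow_succ_le (B : ℕ) :
    2 * ∑ b ∈ Finset.range B, 2 ^ (b + 1) ≤ 2 ^ (B + 2) := by
  have := Nat.geomSum_lt le_rfl fun b (hb : b ∈ Finset.range B) => Finset.mem_range.1 hb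
  simp only [pow_succ, ← Finset.sum_mul]
  omega

end DyadicBlocks

section FejerCoefficients

/-- The coefficients `(1 - k / n) / k * ω ^ k` of the smoothed counting statistic at `ω`. -/
def fejerCoeff (n : ℕ) (ω : ℂ) (k : ℕ) : ℂ := ((1 - k / n) / k : ℝ) * ω ^ k

variable {B b k n : ℕ} {ω ω' ζ : ℂ}

lemma norm_fejerCoeff (hk : k ≤ n) (hω : ‖ω‖ = 1) : ‖fejerCoeff n ω k‖ = (1 - k / n) / k := by
  have : (k / n : ℝ) ≤ 1 := div_le_one_of_le₀ (by exact_mod_cast hk) (by positivity)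
  rw [fejerCoeff, norm_mul, norm_pow, hω, one_pow, mul_one, Complex.norm_real, Real.norm_of_nonneg]
  exact div_nonneg (sub_nonneg.2 this) (by positivity)

lemma mul_norm_fejerCoeff_sq (hk : k ≤ n) (hω : ‖ω‖ = 1) :
    k * ‖fejerCoeff n ω k‖ ^ 2 = (1 - k / n) ^ 2 / k := by
  rw [norm_fejerCoeff hk hω]
  rcases k.eq_zero_or_pos with rfl | hk0
  · simp
  · field_simp

lemma mul_norm_fejerCoeff_sq_le (hb : b < B) (hk : k ∈ dyadicBlock b) (hω : ‖ω‖ = 1) :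
    k * ‖fejerCoeff (2 ^ B) ω k‖ ^ 2 ≤ (1 / 2) ^ b := by
  have hkB := (lt_two_pow_of_mem_dyadicBlock hb hk).le
  have hbk : (2 : ℝ) ^ b ≤ k := by exact_mod_cast (Finset.mem_Ico.1 hk).1
  have ratio_le_one : (k / (2 ^ B : ℕ) : ℝ) ≤ 1 :=
    div_le_one_of_le₀ (by exact_mod_cast hkB) (by positivity)
  have ratio_nonneg : (0 : ℝ) ≤ k / (2 ^ B : ℕ) := by positivity
  rw [mul_norm_fejerCoeff_sq hkB hω, one_div_pow]
  exact div_le_div₀ zero_le_one (by nlinarith) (by positivity) hbk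

lemma linearFormVar_fejerCoeff_le_one (hb : b < B) (hω : ‖ω‖ = 1) :
    linearFormVar (dyadicBlock b) (fejerCoeff (2 ^ B) ω) ≤ 1 :=
  calc linearFormVar (dyadicBlock b) (fejerCoeff (2 ^ B) ω)
      ≤ (dyadicBlock b).card • (1 / 2 : ℝ) ^ b :=
        Finset.sum_le_card_nsmul _ _ _ fun _ hk => mul_norm_fejerCoeff_sq_le hb hk hω
    _ = 1 := by
      rw [card_dyadicBlock, nsmul_eq_mul, Nat.cast_pow, ← mul_pow]
      norm_num

lemma one_div_eight_le_linearFormVar_fejerCoeff (hb : b + 2 ≤ B) (hω : ‖ω‖ = 1) :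
    1 / 8 ≤ linearFormVar (dyadicBlock b) (fejerCoeff (2 ^ B) ω) := by
  have summand_ge (k : ℕ) (hk : k ∈ dyadicBlock b) :
      1 / 8 * (1 / 2 : ℝ) ^ b ≤ k * ‖fejerCoeff (2 ^ B) ω k‖ ^ 2 := by
    rw [mul_norm_fejerCoeff_sq (lt_two_pow_of_mem_dyadicBlock (by omega) hk).le hω]
    rw [dyadicBlock, Finset.mem_Ico] at hk
    have hk0 : 0 < k := Nat.two_pow_pos b |>.trans_le hk.1
    have hk2 : (k : ℝ) ≤ 2 ^ b * 2 := by rw [← pow_succ]; exact_mod_cast hk.2.le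
    have hB : (2 : ℝ) ^ b * 4 ≤ 2 ^ B :=
      calc (2 : ℝ) ^ b * 4 = 2 ^ (b + 2) := by ring
        _ ≤ 2 ^ B := pow_le_pow_right₀ one_le_two hb
    have ratio_le : (k / (2 ^ B : ℕ) : ℝ) ≤ 1 / 2 := by
      rw [Nat.cast_pow, Nat.cast_two, div_le_div_iff₀ (by positivity) two_pos]
      linarith
    calc 1 / 8 * (1 / 2 : ℝ) ^ b = (1 / 2) ^ 2 / (2 ^ b * 2) := by
          rw [one_div_pow]; field_simp; norm_num
      _ ≤ (1 - k / (2 ^ B : ℕ)) ^ 2 / k := by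
          gcongr
          linarith
  calc (1 / 8 : ℝ) = (dyadicBlock b).card • (1 / 8 * (1 / 2 : ℝ) ^ b) := by
        rw [card_dyadicBlock, nsmul_eq_mul, Nat.cast_pow, mul_left_comm, ← mul_pow]
        norm_num
    _ ≤ linearFormVar (dyadicBlock b) (fejerCoeff (2 ^ B) ω) :=
        Finset.card_nsmul_le_sum _ _ _ summand_ge

lemma linearFormVar_fejerCoeff_eq (hb : b < B) (hω : ‖ω‖ = 1) (hω' : ‖ω'‖ = 1) :
    linearFormVar (dyadicBlock b) (fejerCoeff (2 ^ B) ω) =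
      linearFormVar (dyadicBlock b) (fejerCoeff (2 ^ B) ω') :=
  Finset.sum_congr rfl fun k hk => by
    have hkB := (lt_two_pow_of_mem_dyadicBlock hb hk).le
    rw [norm_fejerCoeff hkB hω, norm_fejerCoeff hkB hω']

lemma norm_linearFormCov_fejerCoeff_le_one (hb : b < B) (hω : ‖ω‖ = 1) (hω' : ‖ω'‖ = 1) :
    ‖linearFormCov (dyadicBlock b) (fejerCoeff (2 ^ B) ω) (fejerCoeff (2 ^ B) ω')‖ ≤ 1 := by
  refine (norm_sum_le _ _).trans <| (Finset.sum_le_sum fun k hk => le_of_eq ?_).trans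
    (linearFormVar_fejerCoeff_le_one hb hω)
  have hkB := (lt_two_pow_of_mem_dyadicBlock hb hk).le
  rw [norm_mul, norm_mul, norm_star, Complex.norm_natCast, norm_fejerCoeff hkB hω,
    norm_fejerCoeff hkB hω']
  ring

lemma sum_norm_linearFormCov_fejerCoeff_sq_le (hb : b < B) (hω : ‖ω‖ = 1)
    (hζ : IsPrimitiveRoot ζ (2 ^ B)) :
    ∑ l ∈ Finset.range (2 ^ B),
      ‖linearFormCov (dyadicBlock b) (fejerCoeff (2 ^ B) (ζ ^ l)) (fejerCoeff (2 ^ B) ω)‖ ^ 2 ≤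
        2 ^ B * (1 / 2) ^ b := by
  set a : ℕ → ℂ := fun k => k * fejerCoeff (2 ^ B) 1 k * star (fejerCoeff (2 ^ B) ω k) with ha
  have cov_eq (l : ℕ) : linearFormCov (dyadicBlock b) (fejerCoeff (2 ^ B) (ζ ^ l))
      (fejerCoeff (2 ^ B) ω) = ∑ k ∈ dyadicBlock b, a k * (ζ ^ l) ^ k := by
    refine Finset.sum_congr rfl fun k _ => ?_
    simp only [ha, fejerCoeff, one_pow]
    ring
  have norm_a_le (k : ℕ) (hk : k ∈ dyadicBlock b) : ‖a k‖ ≤ (1 / 2) ^ b := by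
    have hkB := (lt_two_pow_of_mem_dyadicBlock hb hk).le
    refine le_of_eq_of_le ?_ (mul_norm_fejerCoeff_sq_le hb hk hω)
    rw [norm_mul, norm_mul, norm_star, Complex.norm_natCast, norm_fejerCoeff hkB hω,
      norm_fejerCoeff hkB norm_one]
    ring
  simp only [cov_eq]
  rw [sum_norm_sum_mul_pow_sq hζ fun k hk => lt_two_pow_of_mem_dyadicBlock hb hk, Nat.cast_pow,
    Nat.cast_two]
  gcongr
  calc ∑ k ∈ dyadicBlock b, ‖a k‖ ^ 2 ≤ (dyadicBlock b).card • ((1 / 2 : ℝ) ^ b) ^ 2 :=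
        Finset.sum_le_card_nsmul _ _ _ fun k hk => by gcongr; exact norm_a_le k hk
    _ = (1 / 2) ^ b := by
        rw [card_dyadicBlock, nsmul_eq_mul, Nat.cast_pow, sq, ← mul_assoc, ← mul_pow]
        norm_num

end FejerCoefficients

section ProductAverages

lemma prod_one_add_le_pow {a : ℝ} {y : ℕ → ℝ} {B : ℕ} (hy : ∀ b < B, 0 ≤ y b)
    (hya : ∀ b < B, y b ≤ a) : ∏ b ∈ Finset.range B, (1 + y b) ≤ (1 + a) ^ B := by
  refine (Finset.prod_le_prod (fun b hb => ?_) fun b hb => ?_).trans_eq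
    (by rw [Finset.prod_const, Finset.card_range] : ∏ _b ∈ Finset.range B, (1 + a) = (1 + a) ^ B)
  · linarith [hy b (Finset.mem_range.1 hb)]
  · linarith [hya b (Finset.mem_range.1 hb)]

lemma prod_one_add_le_one_add_sum {a : ℝ} {y : ℕ → ℝ} {B : ℕ} (hy : ∀ b < B, 0 ≤ y b)
    (hya : ∀ b < B, y b ≤ a) :
    ∏ b ∈ Finset.range B, (1 + y b) ≤ 1 + ∑ b ∈ Finset.range B, (1 + a) ^ b * y b := by
  induction B with
  | zero => simp
  | succ B ih =>
    rw [Finset.prod_range_succ, Finset.sum_range_succ, mul_add, mul_one, ← add_assoc]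
    have hy' (b) (hb : b < B) : 0 ≤ y b := hy b (by omega)
    have hya' (b) (hb : b < B) : y b ≤ a := hya b (by omega)
    exact add_le_add (ih hy' hya') <|
      mul_le_mul_of_nonneg_right (prod_one_add_le_pow hy' hya') (hy B (by omega))

lemma sum_geometric_range_le {q : ℝ} (hq0 : 0 ≤ q) (hq1 : q < 1) (B : ℕ) :
    ∑ b ∈ Finset.range B, q ^ b ≤ (1 - q)⁻¹ :=
  tsum_geometric_of_lt_one hq0 hq1 ▸
    (summable_geometric_of_lt_one hq0 hq1).sum_le_tsum _ fun _ _ => by positivity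

lemma sq_prod_one_add_le {y : ℕ → ℝ} {B : ℕ} (hy : ∀ b < B, 0 ≤ y b)
    (hy4 : ∀ b < B, y b ≤ 1 / 4) :
    (∏ b ∈ Finset.range B, (1 + y b)) ^ 2 ≤
      2 + 16 * ∑ b ∈ Finset.range B, (25 / 14) ^ b * y b ^ 2 := by
  set s := ∑ b ∈ Finset.range B, (1 + 1 / 4 : ℝ) ^ b * y b
  set w := ∑ b ∈ Finset.range B, (25 / 14) ^ b * y b ^ 2
  have prod_le : ∏ b ∈ Finset.range B, (1 + y b) ≤ 1 + s := prod_one_add_le_one_add_sum hy hy4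
  have prod_nonneg : 0 ≤ ∏ b ∈ Finset.range B, (1 + y b) :=
    Finset.prod_nonneg fun b hb => by linarith [hy b (Finset.mem_range.1 hb)]
  have cauchy_schwarz : s ^ 2 ≤ (∑ b ∈ Finset.range B, (7 / 8 : ℝ) ^ b) * w := by
    refine Finset.sum_sq_le_sum_mul_sum_of_sq_le_mul _ (fun b _ => by positivity)
      (fun b _ => by positivity) fun b _ => le_of_eq ?_
    rw [← mul_assoc, ← mul_pow, mul_pow, ← pow_mul, pow_mul']
    norm_num
  have w_nonneg : 0 ≤ w := Finset.sum_nonneg fun b _ => by positivity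
  have geom_le : ∑ b ∈ Finset.range B, (7 / 8 : ℝ) ^ b ≤ 8 :=
    (sum_geometric_range_le (by norm_num) (by norm_num) B).trans_eq (by norm_num)
  calc (∏ b ∈ Finset.range B, (1 + y b)) ^ 2 ≤ (1 + s) ^ 2 := by gcongr
    _ ≤ 2 + 2 * s ^ 2 := by linarith [sq_nonneg (1 - s)]
    _ ≤ 2 + 16 * w := by nlinarith

-- The per-factor growth `(5 / 4) ^ 2` must stay below the decay rate `2`, hence the bound `1 / 4`.
lemma sum_sq_prod_one_add_le {ι : Type*} (s : Finset ι) {B : ℕ} {y : ι → ℕ → ℝ}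
    (hy : ∀ i ∈ s, ∀ b < B, 0 ≤ y i b) (hy4 : ∀ i ∈ s, ∀ b < B, y i b ≤ 1 / 4)
    (hsum : ∀ b < B, ∑ i ∈ s, y i b ^ 2 ≤ s.card * (1 / 16 * (1 / 2) ^ b)) :
    ∑ i ∈ s, (∏ b ∈ Finset.range B, (1 + y i b)) ^ 2 ≤ 12 * s.card :=
  calc ∑ i ∈ s, (∏ b ∈ Finset.range B, (1 + y i b)) ^ 2
      ≤ ∑ i ∈ s, (2 + 16 * ∑ b ∈ Finset.range B, (25 / 14) ^ b * y i b ^ 2) :=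
        Finset.sum_le_sum fun i hi => sq_prod_one_add_le (hy i hi) (hy4 i hi)
    _ = s.card * 2 + 16 * ∑ b ∈ Finset.range B, (25 / 14) ^ b * ∑ i ∈ s, y i b ^ 2 := by
        rw [Finset.sum_add_distrib, Finset.sum_const, nsmul_eq_mul, ← Finset.mul_sum,
          Finset.sum_comm]
        simp only [Finset.mul_sum]
    _ ≤ s.card * 2 +
          16 * ∑ b ∈ Finset.range B, (25 / 14 : ℝ) ^ b * (s.card * (1 / 16 * (1 / 2) ^ b)) := by
        gcongr with b hb
        exact hsum b (Finset.mem_range.1 hb)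
    _ = s.card * (2 + ∑ b ∈ Finset.range B, (25 / 28 : ℝ) ^ b) := by
        rw [mul_add, Finset.mul_sum, Finset.mul_sum]
        congr 1
        refine Finset.sum_congr rfl fun b _ => ?_
        rw [show (25 / 28 : ℝ) = 25 / 14 * (1 / 2) by norm_num, mul_pow]
        ring
    _ ≤ s.card * 12 := by
        gcongr
        have := sum_geometric_range_le (q := 25 / 28) (by norm_num) (by norm_num) B
        norm_num at this
        linarith
    _ = 12 * s.card := mul_comm _ _

end ProductAverages

section TiltedMaximum

lemma le_mul_sq_add_one_div {ε : ℝ} (hε : 0 < ε) (x : ℝ) : x ≤ ε * x ^ 2 + 1 / (4 * ε) := by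
  have : ε * x ^ 2 + 1 / (4 * ε) - x = ε * (x - 1 / (2 * ε)) ^ 2 := by field_simp; ring
  have : 0 ≤ ε * (x - 1 / (2 * ε)) ^ 2 := by positivity
  linarith

variable {ι : Type*} {s : Finset ι}

lemma sum_mul_le_mul_sum_sq_add {ε : ℝ} {A T : ι → ℝ} (hA : ∀ i ∈ s, 0 ≤ A i) (hε : 0 < ε) :
    ∑ i ∈ s, A i * T i ≤ ε * ∑ i ∈ s, A i * T i ^ 2 + 1 / (4 * ε) * ∑ i ∈ s, A i := by
  rw [Finset.mul_sum, Finset.mul_sum, ← Finset.sum_add_distrib]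
  refine Finset.sum_le_sum fun i hi => ?_
  linarith [mul_le_mul_of_nonneg_left (le_mul_sq_add_one_div hε (T i)) (hA i hi)]

lemma sum_mul_le_of_le {A T : ι → ℝ} {M r ε η : ℝ} (hA : ∀ i ∈ s, 0 ≤ A i)
    (hT : ∀ i ∈ s, T i ≤ M) (hM : 0 ≤ M) (hr : 0 < r) (hε : 0 < ε) (hη : 0 < η) :
    ∑ i ∈ s, A i * T i ≤ r * ∑ i ∈ s, A i + ε * ∑ i ∈ s, A i * T i ^ 2 +
      1 / (4 * ε) * (η * (∑ i ∈ s, A i) ^ 2 + 1 / (4 * η * r) * M) := by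
  have hZ : 0 ≤ ∑ i ∈ s, A i := Finset.sum_nonneg hA
  have hF : 0 ≤ ∑ i ∈ s, A i * T i ^ 2 :=
    Finset.sum_nonneg fun i hi => mul_nonneg (hA i hi) (sq_nonneg _)
  rcases le_or_gt M r with hMr | hrM
  · have first_moment_le : ∑ i ∈ s, A i * T i ≤ r * ∑ i ∈ s, A i := by
      rw [mul_comm, Finset.sum_mul]
      exact Finset.sum_le_sum fun i hi =>
        mul_le_mul_of_nonneg_left ((hT i hi).trans hMr) (hA i hi)
    exact first_moment_le.trans <| by rw [add_assoc]; exact le_add_of_nonneg_right (by positivity)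
  · have inv_le : 1 / (4 * η) ≤ 1 / (4 * η * r) * M :=
      calc 1 / (4 * η) = 1 / (4 * η * r) * r := by field_simp
        _ ≤ 1 / (4 * η * r) * M := by gcongr
    have mass_le := (le_mul_sq_add_one_div hη (∑ i ∈ s, A i)).trans (add_le_add_right inv_le _)
    have := mul_le_mul_of_nonneg_left mass_le (show 0 ≤ 1 / (4 * ε) by positivity)
    linarith [sum_mul_le_mul_sum_sq_add (T := T) hA hε, mul_nonneg hr.le hZ]

variable {Ω : Type*} [MeasurableSpace Ω] {μ : Measure Ω} {A T : ι → Ω → ℝ} {M : Ω → ℝ}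

lemma integral_sum_mul_le {r ε η : ℝ} (hA : ∀ i ∈ s, ∀ x, 0 ≤ A i x)
    (hT : ∀ i ∈ s, ∀ x, T i x ≤ M x) (hM : ∀ x, 0 ≤ M x)
    (hr : 0 < r) (hε : 0 < ε) (hη : 0 < η)
    (hA₁ : Integrable (fun x => ∑ i ∈ s, A i x) μ)
    (hA₂ : Integrable (fun x => (∑ i ∈ s, A i x) ^ 2) μ)
    (hT₁ : Integrable (fun x => ∑ i ∈ s, A i x * T i x) μ)
    (hT₂ : Integrable (fun x => ∑ i ∈ s, A i x * T i x ^ 2) μ) (hMi : Integrable M μ) :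
    ∫ x, ∑ i ∈ s, A i x * T i x ∂μ ≤
      r * ∫ x, ∑ i ∈ s, A i x ∂μ + ε * ∫ x, ∑ i ∈ s, A i x * T i x ^ 2 ∂μ +
        1 / (4 * ε) * (η * ∫ x, (∑ i ∈ s, A i x) ^ 2 ∂μ + 1 / (4 * η * r) * ∫ x, M x ∂μ) := by
  have hsum := (hA₁.const_mul r).fun_add (hT₂.const_mul ε)
  have hrest := (hA₂.const_mul η).fun_add (hMi.const_mul (1 / (4 * η * r)))
  refine (integral_mono hT₁ (hsum.fun_add (hrest.const_mul (1 / (4 * ε)))) fun x =>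
    sum_mul_le_of_le (hA · · x) (hT · · x) (hM x) hr hε hη).trans_eq ?_
  rw [integral_add hsum (hrest.const_mul _), integral_add (hA₁.const_mul r) (hT₂.const_mul ε),
    integral_const_mul, integral_const_mul, integral_const_mul,
    integral_add (hA₂.const_mul η) (hMi.const_mul _), integral_const_mul, integral_const_mul]

-- The parameters are chosen so that three of the four terms of `integral_sum_mul_le` are each at
-- most a quarter of the first moment.
theorem le_integral_of_tilted_moments {m V K : ℝ} (hA : ∀ i ∈ s, ∀ x, 0 ≤ A i x)
    (hT : ∀ i ∈ s, ∀ x, T i x ≤ M x) (hM : ∀ x, 0 ≤ M x)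
    (hA₁ : Integrable (fun x => ∑ i ∈ s, A i x) μ)
    (hA₂ : Integrable (fun x => (∑ i ∈ s, A i x) ^ 2) μ)
    (hT₁ : Integrable (fun x => ∑ i ∈ s, A i x * T i x) μ)
    (hT₂ : Integrable (fun x => ∑ i ∈ s, A i x * T i x ^ 2) μ) (hMi : Integrable M μ)
    (hm : 0 < m) (hV : 0 < V) (hK : 0 < K) (mass_pos : 0 < ∫ x, ∑ i ∈ s, A i x ∂μ)
    (le_mean : m * ∫ x, ∑ i ∈ s, A i x ∂μ ≤ ∫ x, ∑ i ∈ s, A i x * T i x ∂μ)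
    (second_le : ∫ x, ∑ i ∈ s, A i x * T i x ^ 2 ∂μ ≤ V * ∫ x, ∑ i ∈ s, A i x ∂μ)
    (overlap_le : ∫ x, (∑ i ∈ s, A i x) ^ 2 ∂μ ≤ K * (∫ x, ∑ i ∈ s, A i x ∂μ) ^ 2) :
    m ^ 5 / (16 * V ^ 2 * K) ≤ ∫ x, M x ∂μ := by
  set G := ∫ x, ∑ i ∈ s, A i x ∂μ
  set D := ∫ x, M x ∂μ
  have bound : m * G ≤ m / 4 * G + m / (4 * V) * (V * G) + 1 / (4 * (m / (4 * V))) *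
      (m ^ 2 / (4 * V * K * G) * (K * G ^ 2) +
        1 / (4 * (m ^ 2 / (4 * V * K * G)) * (m / 4)) * D) := by
    refine le_mean.trans <| (integral_sum_mul_le hA hT hM (r := m / 4) (ε := m / (4 * V))
      (η := m ^ 2 / (4 * V * K * G)) (by positivity) (by positivity) (by positivity)
      hA₁ hA₂ hT₁ hT₂ hMi).trans ?_
    gcongr
  have simplified : m * G ≤ 3 / 4 * (m * G) + 4 * V ^ 2 * K * G * D / m ^ 4 := by
    refine bound.trans_eq ?_
    field_simp
    ring
  have quarter_le : m * G / 4 * m ^ 4 ≤ 4 * V ^ 2 * K * G * D :=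
    (le_div_iff₀ (by positivity)).1 (by linarith)
  rw [div_le_iff₀ (by positivity)]
  refine le_of_mul_le_mul_left ?_ mass_pos
  linarith

end TiltedMaximum

section TiltedMoments

variable {N : ℕ}

lemma integral_norm_sq_mul_im (ℙ : Measure U(N)) [IsFiniteMeasure ℙ] (f g : MvPolynomial ℕ ℂ) :
    ∫ V, ‖evalPowerSum N g V‖ ^ 2 * (evalPowerSum N f V).im ∂ℙ = (haarForm ℙ (f * g) g).im := by
  have hint : Integrable (fun V => (evalPowerSum N (f * g) * star (evalPowerSum N g)) V) ℙ :=
    integrable_of_continuous (ContinuousMap.continuous _) ℙ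
  refine Eq.trans ?_ (integral_im hint)
  refine integral_congr_ae (ae_of_all _ fun V => ?_)
  simp only [map_mul, ContinuousMap.mul_apply, ContinuousMap.star_apply, RCLike.im_eq_complex_im]
  rw [mul_assoc, ← starRingEnd_apply, Complex.mul_conj', ← Complex.ofReal_pow,
    Complex.im_mul_ofReal, mul_comm]

lemma sqNorm_sum_mul_le {ι : Type*} (ℙ : Measure U(N)) [IsFiniteMeasure ℙ] (s : Finset ι)
    (f : ι → MvPolynomial ℕ ℂ) (g : MvPolynomial ℕ ℂ) :
    sqNorm ℙ ((∑ i ∈ s, f i) * g) ≤ s.card * ∑ i ∈ s, sqNorm ℙ (f i * g) := by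
  simp only [sqNorm]
  rw [← integral_finsetSum _ fun i _ => integrable_of_continuous (by fun_prop) ℙ,
    ← integral_const_mul]
  refine integral_mono (integrable_of_continuous (by fun_prop) ℙ)
    (integrable_of_continuous (by fun_prop) ℙ) fun V => ?_
  simp only [Finset.sum_mul, map_sum, ContinuousMap.sum_apply]
  calc ‖∑ i ∈ s, evalPowerSum N (f i * g) V‖ ^ 2
      ≤ (∑ i ∈ s, ‖evalPowerSum N (f i * g) V‖) ^ 2 := by gcongr; exact norm_sum_le _ _
    _ ≤ s.card * ∑ i ∈ s, ‖evalPowerSum N (f i * g) V‖ ^ 2 := sq_sum_le_card_mul_sum_sq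

lemma integral_norm_sq_mul_im_sq_le (ℙ : Measure U(N)) [IsFiniteMeasure ℙ]
    (f g : MvPolynomial ℕ ℂ) :
    ∫ V, ‖evalPowerSum N g V‖ ^ 2 * (evalPowerSum N f V).im ^ 2 ∂ℙ ≤ sqNorm ℙ (f * g) := by
  refine integral_mono (integrable_of_continuous (by fun_prop) ℙ)
    (integrable_of_continuous (by fun_prop) ℙ) fun V => ?_
  simp only [map_mul, ContinuousMap.mul_apply, norm_mul, mul_pow]
  rw [mul_comm]
  gcongr ?_ * _
  exact sq_le_sq.2 (by simpa using Complex.abs_im_le_norm _)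

end TiltedMoments

section FejerTilt

variable {N B : ℕ} {ω ω' ζ : ℂ}

/-- The smoothed counting statistic at `ω`, a polynomial in the power sums. -/
def fejerStat (B : ℕ) (ω : ℂ) : MvPolynomial ℕ ℂ :=
  ∑ b ∈ Finset.range B, linearForm (dyadicBlock b) (fejerCoeff (2 ^ B) ω)

/-- The Riesz product over the dyadic blocks of `fejerStat B ω`. Weighting Haar measure by its
squared modulus makes the imaginary part of `fejerStat B ω` of order `B`. -/
def fejerTilt (B : ℕ) (ω : ℂ) : MvPolynomial ℕ ℂ :=
  rieszProd dyadicBlock (-(Complex.I / 2)) (fejerCoeff (2 ^ B) ω) (Finset.range B)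

lemma evalPowerSum_fejerStat_im_le (U : U(N)) (hN : 0 < N) (B : ℕ) (hω : ‖ω‖ = 1) :
    (evalPowerSum N (fejerStat B ω) U).im ≤ 2 * π * N * dK N U := by
  refine le_of_eq_of_le ?_ (im_sum_div_mul_pow_mul_trace_pow_le U hN (2 ^ B) hω)
  rw [← sum_sum_dyadicBlock]
  simp only [fejerStat, linearForm, map_sum, map_smul, evalPowerSum_X, ContinuousMap.sum_apply,
    ContinuousMap.smul_apply, smul_eq_mul, powerSum_apply, fejerCoeff]

lemma norm_neg_I_div_two_sq : ‖-(Complex.I / 2)‖ ^ 2 = 1 / 4 := by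
  rw [norm_neg, norm_div, Complex.norm_I, Complex.norm_two]
  norm_num

variable (ℙ : Measure U(N)) [IsProbabilityMeasure ℙ] [ℙ.IsMulLeftInvariant]

lemma sqNorm_fejerTilt (hBN : 2 ^ (B + 2) ≤ N) (ω : ℂ) : sqNorm ℙ (fejerTilt B ω) =
    ∏ b ∈ Finset.range B, (1 + 1 / 4 * linearFormVar (dyadicBlock b) (fejerCoeff (2 ^ B) ω)) := by
  rw [fejerTilt, sqNorm_rieszProd ℙ dyadicBlock_subset_Icc pairwise_disjoint_dyadicBlock _ _
    ((two_mul_sum_two_pow_succ_le B).trans hBN), norm_neg_I_div_two_sq]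

lemma sqNorm_fejerTilt_pos (hBN : 2 ^ (B + 2) ≤ N) (ω : ℂ) : 0 < sqNorm ℙ (fejerTilt B ω) := by
  rw [sqNorm_fejerTilt ℙ hBN]
  refine Finset.prod_pos fun b _ => ?_
  linarith [linearFormVar_nonneg (dyadicBlock b) (fejerCoeff (2 ^ B) ω)]

lemma sqNorm_fejerTilt_eq (hBN : 2 ^ (B + 2) ≤ N) (hω : ‖ω‖ = 1) (hω' : ‖ω'‖ = 1) :
    sqNorm ℙ (fejerTilt B ω) = sqNorm ℙ (fejerTilt B ω') := by
  rw [sqNorm_fejerTilt ℙ hBN, sqNorm_fejerTilt ℙ hBN]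
  exact Finset.prod_congr rfl fun b hb => by
    rw [linearFormVar_fejerCoeff_eq (Finset.mem_range.1 hb) hω hω']

lemma sqNorm_fejerTilt_eq_mul_erase (hBN : 2 ^ (B + 2) ≤ N) (ω : ℂ) {b : ℕ} (hb : b < B) :
    sqNorm ℙ (fejerTilt B ω) = (1 + 1 / 4 * linearFormVar (dyadicBlock b) (fejerCoeff (2 ^ B) ω)) *
      sqNorm ℙ (rieszProd dyadicBlock (-(Complex.I / 2)) (fejerCoeff (2 ^ B) ω)
        ((Finset.range B).erase b)) := by
  rw [fejerTilt, sqNorm_rieszProd_erase ℙ dyadicBlock_subset_Icc pairwise_disjoint_dyadicBlock _ _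
    ((two_mul_sum_two_pow_succ_le B).trans hBN) (Finset.mem_range.2 hb), norm_neg_I_div_two_sq]

lemma im_haarForm_linearForm_mul_fejerTilt (hBN : 2 ^ (B + 2) ≤ N) (ω : ℂ) {b : ℕ} (hb : b < B) :
    (haarForm ℙ (linearForm (dyadicBlock b) (fejerCoeff (2 ^ B) ω) * fejerTilt B ω)
      (fejerTilt B ω)).im =
      1 / 2 * linearFormVar (dyadicBlock b) (fejerCoeff (2 ^ B) ω) *
        sqNorm ℙ (rieszProd dyadicBlock (-(Complex.I / 2)) (fejerCoeff (2 ^ B) ω)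
          ((Finset.range B).erase b)) := by
  have star_β : star (-(Complex.I / 2)) = (1 / 2 : ℝ) * Complex.I := by
    rw [← starRingEnd_apply, map_neg, map_div₀, Complex.conj_I, map_ofNat]; push_cast; ring
  rw [fejerTilt, haarForm_linearForm_mul_rieszProd ℙ dyadicBlock_subset_Icc
    pairwise_disjoint_dyadicBlock _ _ ((two_mul_sum_two_pow_succ_le B).trans hBN)
    (Finset.mem_range.2 hb), star_β, Complex.im_mul_ofReal, Complex.im_mul_ofReal,
    Complex.im_ofReal_mul, Complex.I_im, mul_one]

lemma le_im_haarForm_fejerStat_mul_fejerTilt (hB : 2 ≤ B) (hBN : 2 ^ (B + 2) ≤ N) (hω : ‖ω‖ = 1) :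
    B / 40 * sqNorm ℙ (fejerTilt B ω) ≤
      (haarForm ℙ (fejerStat B ω * fejerTilt B ω) (fejerTilt B ω)).im := by
  set v : ℕ → ℝ := fun b => linearFormVar (dyadicBlock b) (fejerCoeff (2 ^ B) ω)
  set r : ℕ → ℝ := fun b => sqNorm ℙ (rieszProd dyadicBlock (-(Complex.I / 2))
    (fejerCoeff (2 ^ B) ω) ((Finset.range B).erase b))
  have v_nonneg (b : ℕ) : 0 ≤ v b := linearFormVar_nonneg _ _
  have r_nonneg (b : ℕ) : 0 ≤ r b := sqNorm_nonneg ℙ _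
  have im_eq : (haarForm ℙ (fejerStat B ω * fejerTilt B ω) (fejerTilt B ω)).im =
      ∑ b ∈ Finset.range B, 1 / 2 * v b * r b := by
    rw [fejerStat, Finset.sum_mul, map_sum, LinearMap.sum_apply, Complex.im_sum]
    exact Finset.sum_congr rfl fun b hb =>
      im_haarForm_linearForm_mul_fejerTilt ℙ hBN ω (Finset.mem_range.1 hb)
  have summand_ge (b : ℕ) (hb : b ∈ Finset.range (B - 1)) :
      1 / 20 * sqNorm ℙ (fejerTilt B ω) ≤ 1 / 2 * v b * r b := by
    rw [Finset.mem_range] at hb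
    have hv : 1 / 8 ≤ v b := one_div_eight_le_linearFormVar_fejerCoeff (by omega) hω
    rw [sqNorm_fejerTilt_eq_mul_erase ℙ hBN ω (show b < B by omega), ← mul_assoc]
    exact mul_le_mul_of_nonneg_right (by linarith) (r_nonneg b)
  rw [im_eq]
  calc B / 40 * sqNorm ℙ (fejerTilt B ω)
      ≤ (B - 1 : ℕ) * (1 / 20 * sqNorm ℙ (fejerTilt B ω)) := by
        have hB' : (2 : ℝ) ≤ B := by exact_mod_cast hB
        rw [Nat.cast_sub (by omega), ← mul_assoc, Nat.cast_one]
        exact mul_le_mul_of_nonneg_right (by linarith) (sqNorm_nonneg ℙ _)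
    _ ≤ ∑ b ∈ Finset.range (B - 1), 1 / 2 * v b * r b := by
        simpa using Finset.card_nsmul_le_sum _ _ _ summand_ge
    _ ≤ ∑ b ∈ Finset.range B, 1 / 2 * v b * r b :=
        Finset.sum_le_sum_of_subset_of_nonneg (Finset.range_subset_range.2 (Nat.sub_le B 1))
          fun b _ _ => mul_nonneg (mul_nonneg (by norm_num) (v_nonneg b)) (r_nonneg b)

lemma sqNorm_fejerStat_mul_fejerTilt_le (hBN : 2 ^ (B + 2) ≤ N) (hω : ‖ω‖ = 1) :
    sqNorm ℙ (fejerStat B ω * fejerTilt B ω) ≤ 2 * B ^ 2 * sqNorm ℙ (fejerTilt B ω) := by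
  have summand_le (b : ℕ) (hb : b ∈ Finset.range B) :
      sqNorm ℙ (linearForm (dyadicBlock b) (fejerCoeff (2 ^ B) ω) * fejerTilt B ω) ≤
        2 * sqNorm ℙ (fejerTilt B ω) := by
    have hbB := Finset.mem_range.1 hb
    have hv := linearFormVar_nonneg (dyadicBlock b) (fejerCoeff (2 ^ B) ω)
    have hv' := linearFormVar_fejerCoeff_le_one hbB hω
    rw [sqNorm_fejerTilt_eq_mul_erase ℙ hBN ω hbB, fejerTilt, sqNorm_linearForm_mul_rieszProd ℙ
      dyadicBlock_subset_Icc pairwise_disjoint_dyadicBlock _ _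
      ((two_mul_sum_two_pow_succ_le B).trans hBN) hb, norm_neg_I_div_two_sq, ← mul_assoc]
    exact mul_le_mul_of_nonneg_right (by nlinarith) (sqNorm_nonneg ℙ _)
  calc sqNorm ℙ (fejerStat B ω * fejerTilt B ω)
      ≤ (Finset.range B).card * ∑ b ∈ Finset.range B,
          sqNorm ℙ (linearForm (dyadicBlock b) (fejerCoeff (2 ^ B) ω) * fejerTilt B ω) :=
        sqNorm_sum_mul_le ℙ _ _ _
    _ ≤ (Finset.range B).card * ((Finset.range B).card • (2 * sqNorm ℙ (fejerTilt B ω))) := by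
        gcongr
        exact Finset.sum_le_card_nsmul _ _ _ summand_le
    _ = 2 * B ^ 2 * sqNorm ℙ (fejerTilt B ω) := by
        rw [Finset.card_range, nsmul_eq_mul]; ring

lemma sqNorm_fejerTilt_mul_le (hBN : 2 ^ (B + 2) ≤ N) (ω ω' : ℂ) :
    sqNorm ℙ (fejerTilt B ω * fejerTilt B ω') ≤
      sqNorm ℙ (fejerTilt B ω) * sqNorm ℙ (fejerTilt B ω') *
        (∏ b ∈ Finset.range B, (1 + 1 / 4 * ‖linearFormCov (dyadicBlock b) (fejerCoeff (2 ^ B) ω)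
          (fejerCoeff (2 ^ B) ω')‖)) ^ 2 := by
  rw [sqNorm_fejerTilt ℙ hBN, sqNorm_fejerTilt ℙ hBN, ← Finset.prod_mul_distrib,
    ← Finset.prod_pow, ← Finset.prod_mul_distrib, ← norm_neg_I_div_two_sq]
  exact sqNorm_rieszProd_mul_le ℙ dyadicBlock_subset_Icc pairwise_disjoint_dyadicBlock _ _ _
    ((two_mul_sum_two_pow_succ_le B).trans hBN)

lemma sum_sqNorm_fejerTilt_mul_le (hBN : 2 ^ (B + 2) ≤ N) (hζ : IsPrimitiveRoot ζ (2 ^ B))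
    (hω : ‖ω‖ = 1) :
    ∑ l ∈ Finset.range (2 ^ B), sqNorm ℙ (fejerTilt B (ζ ^ l) * fejerTilt B ω) ≤
      12 * 2 ^ B * sqNorm ℙ (fejerTilt B ω) ^ 2 := by
  have norm_ζ_pow (l : ℕ) : ‖ζ ^ l‖ = 1 := by
    rw [norm_pow, hζ.norm'_eq_one (by positivity), one_pow]
  set y : ℕ → ℕ → ℝ := fun l b => 1 / 4 *
    ‖linearFormCov (dyadicBlock b) (fejerCoeff (2 ^ B) (ζ ^ l)) (fejerCoeff (2 ^ B) ω)‖ with hy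
  have sum_sq_prod_le := sum_sq_prod_one_add_le (Finset.range (2 ^ B)) (B := B) (y := y)
    (fun l _ b _ => by positivity)
    (fun l _ b hb => by
      simp only [hy]
      linarith [norm_linearFormCov_fejerCoeff_le_one hb (norm_ζ_pow l) hω])
    (fun b hb => by
      have := sum_norm_linearFormCov_fejerCoeff_sq_le hb hω hζ
      simp only [hy, mul_pow, ← Finset.mul_sum, Finset.card_range, Nat.cast_pow, Nat.cast_ofNat]
      linarith)
  calc ∑ l ∈ Finset.range (2 ^ B), sqNorm ℙ (fejerTilt B (ζ ^ l) * fejerTilt B ω)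
      ≤ ∑ l ∈ Finset.range (2 ^ B), sqNorm ℙ (fejerTilt B ω) ^ 2 *
          (∏ b ∈ Finset.range B, (1 + y l b)) ^ 2 := by
        refine Finset.sum_le_sum fun l _ => (sqNorm_fejerTilt_mul_le ℙ hBN _ _).trans_eq ?_
        rw [sqNorm_fejerTilt_eq ℙ hBN (norm_ζ_pow l) hω, ← pow_two]
    _ ≤ sqNorm ℙ (fejerTilt B ω) ^ 2 * (12 * (Finset.range (2 ^ B)).card) := by
        rw [← Finset.mul_sum]; gcongr
    _ = 12 * 2 ^ B * sqNorm ℙ (fejerTilt B ω) ^ 2 := by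
        rw [Finset.card_range]; push_cast; ring

lemma integral_sum_norm_fejerTilt_sq (hBN : 2 ^ (B + 2) ≤ N) (hζ : ‖ζ‖ = 1) :
    ∫ V, ∑ l ∈ Finset.range (2 ^ B), ‖evalPowerSum N (fejerTilt B (ζ ^ l)) V‖ ^ 2 ∂ℙ =
      2 ^ B * sqNorm ℙ (fejerTilt B 1) := by
  have sqNorm_eq (l : ℕ) : sqNorm ℙ (fejerTilt B (ζ ^ l)) = sqNorm ℙ (fejerTilt B 1) :=
    sqNorm_fejerTilt_eq ℙ hBN (by rw [norm_pow, hζ, one_pow]) norm_one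
  rw [integral_finsetSum _ fun _ _ => integrable_of_continuous (by fun_prop) ℙ]
  exact (Finset.sum_congr rfl fun l _ => sqNorm_eq l).trans (by simp)

lemma le_integral_sum_norm_fejerTilt_sq_mul_im (hB : 2 ≤ B) (hBN : 2 ^ (B + 2) ≤ N)
    (hζ : ‖ζ‖ = 1) :
    B / 40 * (2 ^ B * sqNorm ℙ (fejerTilt B 1)) ≤
      ∫ V, ∑ l ∈ Finset.range (2 ^ B), ‖evalPowerSum N (fejerTilt B (ζ ^ l)) V‖ ^ 2 *
        (evalPowerSum N (fejerStat B (ζ ^ l)) V).im ∂ℙ := by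
  have norm_ζ_pow (l : ℕ) : ‖ζ ^ l‖ = 1 := by rw [norm_pow, hζ, one_pow]
  rw [integral_finsetSum _ fun _ _ => integrable_of_continuous (by fun_prop) ℙ]
  simp only [integral_norm_sq_mul_im]
  calc B / 40 * (2 ^ B * sqNorm ℙ (fejerTilt B 1))
      = ∑ l ∈ Finset.range (2 ^ B), B / 40 * sqNorm ℙ (fejerTilt B (ζ ^ l)) := by
        simp only [sqNorm_fejerTilt_eq ℙ hBN (norm_ζ_pow _) norm_one, Finset.sum_const,
          Finset.card_range, nsmul_eq_mul, Nat.cast_pow, Nat.cast_ofNat]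
        exact mul_left_comm _ _ _
    _ ≤ _ := Finset.sum_le_sum fun l _ =>
        le_im_haarForm_fejerStat_mul_fejerTilt ℙ hB hBN (norm_ζ_pow l)

lemma integral_sum_norm_fejerTilt_sq_mul_im_sq_le (hBN : 2 ^ (B + 2) ≤ N) (hζ : ‖ζ‖ = 1) :
    ∫ V, ∑ l ∈ Finset.range (2 ^ B), ‖evalPowerSum N (fejerTilt B (ζ ^ l)) V‖ ^ 2 *
        (evalPowerSum N (fejerStat B (ζ ^ l)) V).im ^ 2 ∂ℙ ≤
      2 * B ^ 2 * (2 ^ B * sqNorm ℙ (fejerTilt B 1)) := by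
  have norm_ζ_pow (l : ℕ) : ‖ζ ^ l‖ = 1 := by rw [norm_pow, hζ, one_pow]
  rw [integral_finsetSum _ fun _ _ => integrable_of_continuous (by fun_prop) ℙ]
  calc _ ≤ ∑ l ∈ Finset.range (2 ^ B), 2 * (B : ℝ) ^ 2 * sqNorm ℙ (fejerTilt B (ζ ^ l)) :=
        Finset.sum_le_sum fun l _ => (integral_norm_sq_mul_im_sq_le ℙ _ _).trans
          (sqNorm_fejerStat_mul_fejerTilt_le ℙ hBN (norm_ζ_pow l))
    _ = 2 * B ^ 2 * (2 ^ B * sqNorm ℙ (fejerTilt B 1)) := by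
        simp only [sqNorm_fejerTilt_eq ℙ hBN (norm_ζ_pow _) norm_one, Finset.sum_const,
          Finset.card_range, nsmul_eq_mul, Nat.cast_pow, Nat.cast_ofNat]
        exact mul_left_comm _ _ _

lemma integral_sq_sum_norm_fejerTilt_sq_le (hBN : 2 ^ (B + 2) ≤ N)
    (hζ : IsPrimitiveRoot ζ (2 ^ B)) :
    ∫ V, (∑ l ∈ Finset.range (2 ^ B), ‖evalPowerSum N (fejerTilt B (ζ ^ l)) V‖ ^ 2) ^ 2 ∂ℙ ≤
      12 * (2 ^ B * sqNorm ℙ (fejerTilt B 1)) ^ 2 := by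
  have norm_ζ_pow (l : ℕ) : ‖ζ ^ l‖ = 1 := by
    rw [norm_pow, hζ.norm'_eq_one (by positivity), one_pow]
  calc ∫ V, (∑ l ∈ Finset.range (2 ^ B), ‖evalPowerSum N (fejerTilt B (ζ ^ l)) V‖ ^ 2) ^ 2 ∂ℙ
      = ∑ l' ∈ Finset.range (2 ^ B), ∑ l ∈ Finset.range (2 ^ B),
          sqNorm ℙ (fejerTilt B (ζ ^ l) * fejerTilt B (ζ ^ l')) := by
        simp only [sqNorm, pow_two (Finset.sum _ _), Finset.mul_sum, Finset.sum_mul, map_mul,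
          ContinuousMap.mul_apply, norm_mul, mul_pow]
        rw [integral_finsetSum _ fun _ _ => integrable_of_continuous (by fun_prop) ℙ]
        exact Finset.sum_congr rfl fun _ _ => integral_finsetSum _ fun _ _ =>
          integrable_of_continuous (by fun_prop) ℙ
    _ ≤ (Finset.range (2 ^ B)).card • (12 * 2 ^ B * sqNorm ℙ (fejerTilt B 1) ^ 2) := by
        refine Finset.sum_le_card_nsmul _ _ _ fun l' _ =>
          (sum_sqNorm_fejerTilt_mul_le ℙ hBN hζ (norm_ζ_pow l')).trans_eq ?_
        rw [sqNorm_fejerTilt_eq ℙ hBN (norm_ζ_pow l') norm_one]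
    _ = 12 * (2 ^ B * sqNorm ℙ (fejerTilt B 1)) ^ 2 := by
        rw [Finset.card_range, nsmul_eq_mul]; push_cast; ring

end FejerTilt

section LowerBound

variable {N : ℕ} (ℙ : Measure U(N)) [IsProbabilityMeasure ℙ]

theorem le_two_pi_mul_integral_dK [ℙ.IsMulLeftInvariant] {B : ℕ} (hB : 2 ≤ B)
    (hBN : 2 ^ (B + 2) ≤ N) : B / 78643200000 ≤ 2 * π * N * ∫ V, dK N V ∂ℙ := by
  have hN : 0 < N := Nat.one_le_two_pow.trans hBN
  have : (0 : ℝ) < B := by exact_mod_cast two_pos.trans_le hB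
  have hζ := Complex.isPrimitiveRoot_exp (2 ^ B) (by positivity)
  set ζ := Complex.exp (2 * π * Complex.I / (2 ^ B : ℕ))
  have norm_ζ : ‖ζ‖ = 1 := hζ.norm'_eq_one (by positivity)
  have mass_eq := integral_sum_norm_fejerTilt_sq ℙ hBN norm_ζ
  have mass_pos : 0 < 2 ^ B * sqNorm ℙ (fejerTilt B 1) :=
    mul_pos (by positivity) (sqNorm_fejerTilt_pos ℙ hBN 1)
  have key := le_integral_of_tilted_moments (μ := ℙ) (s := Finset.range (2 ^ B))
    (A := fun l V => ‖evalPowerSum N (fejerTilt B (ζ ^ l)) V‖ ^ 2)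
    (T := fun l V => (evalPowerSum N (fejerStat B (ζ ^ l)) V).im)
    (M := fun V => 2 * π * N * dK N V) (m := B / 40) (V := 2 * B ^ 2) (K := 12)
    (fun _ _ _ => by positivity)
    (fun l _ V => evalPowerSum_fejerStat_im_le V hN B (by rw [norm_pow, norm_ζ, one_pow]))
    (fun V => mul_nonneg (by positivity) (dK_nonneg V))
    (integrable_of_continuous (by fun_prop) ℙ) (integrable_of_continuous (by fun_prop) ℙ)
    (integrable_of_continuous (by fun_prop) ℙ) (integrable_of_continuous (by fun_prop) ℙ)
    ((integrable_dK ℙ).const_mul _) (by positivity) (by positivity) (by norm_num)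
    (mass_eq ▸ mass_pos) (mass_eq ▸ le_integral_sum_norm_fejerTilt_sq_mul_im ℙ hB hBN norm_ζ)
    (mass_eq ▸ integral_sum_norm_fejerTilt_sq_mul_im_sq_le ℙ hBN norm_ζ)
    (mass_eq ▸ integral_sq_sum_norm_fejerTilt_sq_le ℙ hBN hζ)
  rw [integral_const_mul] at key
  refine le_of_eq_of_le ?_ key
  field_simp
  norm_num

lemma one_div_two_mul_le_integral_dK (hN : 0 < N) : 1 / (2 * N) ≤ ∫ V, dK N V ∂ℙ := by
  simpa using integral_mono (μ := ℙ) (integrable_const _) (integrable_dK ℙ)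
    (one_div_two_mul_le_dK · hN)

end LowerBound

lemma log_le_natLog_two_add_one {n : ℕ} (hn : n ≠ 0) : Real.log n ≤ Nat.log 2 n + 1 :=
  calc Real.log n
      ≤ Real.log (2 ^ (Nat.log 2 n + 1)) := by
        gcongr
        exact_mod_cast (Nat.lt_pow_succ_log_self one_lt_two n).le
    _ = (Nat.log 2 n + 1) * Real.log 2 := by rw [Real.log_pow]; push_cast; rfl
    _ ≤ Nat.log 2 n + 1 :=
        mul_le_of_le_one_right (by positivity) (by linarith [Real.log_two_lt_d9])

end

/-- There is a universal constant `c₁ > 0` such that for every `N ≥ 2` and every Haar-distributed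
random `N × N` unitary matrix, `𝔼 d_K(μ_N, ν) ≥ c₁ log N / N`. -/
theorem expected_kolmogorov_lower_bound :
    ∃ c₁ : ℝ, 0 < c₁ ∧ ∀ N : ℕ, 2 ≤ N →
      ∀ ℙ : Measure (Matrix.unitaryGroup (Fin N) ℂ),
        IsProbabilityMeasure ℙ → ℙ.IsHaarMeasure →
          c₁ * Real.log N / N ≤ ∫ U, dK N U ∂ℙ := by
  refine ⟨1 / (24 * 78643200000), by norm_num, fun N hN ℙ _ _ => ?_⟩
  have hN₀ : (0 : ℝ) < N := by positivity
  have log_le : Real.log N ≤ Nat.log 2 N + 1 := log_le_natLog_two_add_one (by omega)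
  rw [div_le_iff₀ hN₀]
  rcases le_or_gt 4 (Nat.log 2 N) with hlog | hlog
  · have main := le_two_pi_mul_integral_dK ℙ (B := Nat.log 2 N - 2) (by omega)
      (by rw [Nat.sub_add_cancel (by omega)]; exact Nat.pow_log_le_self 2 (by omega))
    have hlog' : (4 : ℝ) ≤ Nat.log 2 N := by exact_mod_cast hlog
    have nonneg : 0 ≤ (∫ U, dK N U ∂ℙ) * N :=
      mul_nonneg (integral_nonneg fun U => dK_nonneg U) hN₀.le
    rw [Nat.cast_sub (by omega), Nat.cast_ofNat] at main
    have := mul_le_mul_of_nonneg_right pi_le_four nonneg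
    linarith
  · have trivial_bound := one_div_two_mul_le_integral_dK ℙ (N := N) (by omega)
    have hlog' : (Nat.log 2 N : ℝ) ≤ 3 := by exact_mod_cast Nat.le_of_lt_succ hlog
    have half_le := mul_le_mul_of_nonneg_right trivial_bound hN₀.le
    rw [one_div_mul_eq_div, div_mul_cancel_right₀ hN₀.ne'] at half_le
    linarith
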